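/- arXiv:1910.14439 — 2 statements merged into one kernel-verified Lean document; each statement's English description precedes it below -/
import Mathlib

section
/- Hypercube comparison for the trace chain: for the periodic SPM at L=L_c=⌊e^{β/2}⌋ and β sufficiently large, let Q_𝒢 be the trace generator of the Glauber dynamics on the set 𝒢 of ground states (the Schur complement Q_𝒢 = 𝓛_{𝒢𝒢} − 𝓛_{𝒢,𝒢^c}(𝓛_{𝒢^c,𝒢^c})^{-1}𝓛_{𝒢^c,𝒢}). Then there exist numbers a_L and a_L' with c₁L^{-8} ≤ a_L ≤ c₂L^{-8} and 0 ≤ a_L' ≤ C L^{-9} (for absolute constants c₁,c₂,C) such that, defining the rate matrix Q_hyp on {-1,+1}^{2L-1} by Q_hyp(u,v)=a_L if |u−v|=1 or u=−v, Q_hyp(u,v)=a_L' if |u−v|∈{2,2L−2}, and Q_hyp(u,v)=0 for all other u≠v (diagonal chosen so rows sum to zero), one has sup_{u≠v∈{-1,+1}^{2L-1}} |Q_𝒢(w⁻¹(u),w⁻¹(v)) − Q_hyp(u,v)| ≤ C'·L^{-9}, where |u−v| denotes Hamming distance. -/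
open scoped BigOperators

attribute [local instance] Classical.propDecidable

noncomputable section

namespace SPMP

/-- Spin configurations on the `L × L` torus; `true` codes spin `+1`. -/
abbrev ConfigP (L : ℕ) := Fin L × Fin L → Bool

/-- The real spin value of a Boolean spin. -/
def sval (b : Bool) : ℝ := if b then 1 else -1

/-- Cyclic successor on `Fin L`. -/
def fsucc {L : ℕ} (i : Fin L) : Fin L := ⟨(i.val + 1) % L, Nat.mod_lt _ i.pos⟩

/-- The periodic plaquette variable
`p_x(σ) = σ_{(x₁,x₂)} σ_{(x₁+1,x₂)} σ_{(x₁,x₂+1)} σ_{(x₁+1,x₂+1)}` (coordinates mod `L`). -/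
def plaqP (L : ℕ) (σ : ConfigP L) (x : Fin L × Fin L) : ℝ :=
  sval (σ x) * sval (σ (fsucc x.1, x.2)) * sval (σ (x.1, fsucc x.2)) *
    sval (σ (fsucc x.1, fsucc x.2))

/-- The periodic Hamiltonian `H(σ) = -(1/2) ∑_x p_x(σ)`. -/
def hamP (L : ℕ) (σ : ConfigP L) : ℝ := -(1 / 2) * ∑ x : Fin L × Fin L, plaqP L σ x

/-- The Gibbs measure `π(σ) = e^{-βH(σ)}/Z`. -/
def gibbsP (L : ℕ) (β : ℝ) (σ : ConfigP L) : ℝ :=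
  Real.exp (-β * hamP L σ) / ∑ η : ConfigP L, Real.exp (-β * hamP L η)

/-- Flip one spin. -/
def flipP (L : ℕ) (σ : ConfigP L) (x : Fin L × Fin L) : ConfigP L :=
  fun i => if i = x then !(σ i) else σ i

/-- Metropolis rate of the move `σ → η`: `min(1, e^{-β(H(η)-H(σ))})`. -/
def metroRateP (L : ℕ) (β : ℝ) (σ η : ConfigP L) : ℝ :=
  min 1 (Real.exp (-β * (hamP L η - hamP L σ)))

/-- The Glauber generator of the periodic dynamics, as a matrix. -/
def genP (L : ℕ) (β : ℝ) : Matrix (ConfigP L) (ConfigP L) ℝ :=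
  fun σ η =>
    if η = σ then -(∑ x : Fin L × Fin L, metroRateP L β σ (flipP L σ x))
    else ∑ x : Fin L × Fin L, if η = flipP L σ x then metroRateP L β σ (flipP L σ x) else 0

/-- Entrywise matrix exponential `∑ₖ Aᵏ/k!`. -/
def mexp {n : Type*} [Fintype n] [DecidableEq n] (A : Matrix n n ℝ) : Matrix n n ℝ :=
  fun i j => ∑' k : ℕ, (A ^ k) i j / (Nat.factorial k : ℝ)

/-- Total-variation distance between two (probability) vectors. -/
def tv {n : Type*} [Fintype n] (μ ν : n → ℝ) : ℝ := (∑ s, |μ s - ν s|) / 2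

/-- The `ε`-mixing time of the periodic Glauber dynamics. -/
def tmixP (L : ℕ) (β ε : ℝ) : ℝ :=
  sInf {t : ℝ | 0 < t ∧ ∀ σ : ConfigP L, tv (mexp (t • genP L β) σ) (gibbsP L β) < ε}

/-- The set of ground states: minimizers of the Hamiltonian. -/
def GroundP (L : ℕ) : Set (ConfigP L) := {σ | ∀ η : ConfigP L, hamP L σ ≤ hamP L η}

/-- The critical length scale `L_c = ⌊e^{β/2}⌋`. -/
def Lc (β : ℝ) : ℕ := ⌊Real.exp (β / 2)⌋₊

end SPMP

namespace SPMP

/-- The inverse `w⁻¹ : {-1,+1}^{2L-1} → 𝒢` of the ground-state bijection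
(Definition `DefBijectionPeriodic`). -/
def wInv (L : ℕ) (v : Fin (2 * L - 1) → Bool) : ConfigP L :=
  fun z =>
    if h : z.2.val = L - 1 then
      v ⟨z.1.val, by have h1 := z.1.isLt; omega⟩
    else
      v ⟨z.1.val, by have h1 := z.1.isLt; omega⟩ ==
        v ⟨L + z.2.val, by have h2 := z.2.isLt; omega⟩

/-- The trace (Schur complement) generator of the dynamics on the set `𝒢` of ground states:
`Q_𝒢 = 𝓛_{𝒢𝒢} - 𝓛_{𝒢,𝒢ᶜ} (𝓛_{𝒢ᶜ,𝒢ᶜ})⁻¹ 𝓛_{𝒢ᶜ,𝒢}`. -/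
def traceGen (L : ℕ) (β : ℝ) : Matrix ↥(GroundP L) ↥(GroundP L) ℝ :=
  Matrix.of (fun i j : ↥(GroundP L) => genP L β i.1 j.1) -
    Matrix.of (fun (i : ↥(GroundP L)) (j : ↥(GroundP L)ᶜ) => genP L β i.1 j.1) *
      (Matrix.of fun i j : ↥(GroundP L)ᶜ => genP L β i.1 j.1)⁻¹ *
      Matrix.of (fun (i : ↥(GroundP L)ᶜ) (j : ↥(GroundP L)) => genP L β i.1 j.1)

/-- Hamming distance on the hypercube `{-1,+1}^N`. -/
def hamDist {N : ℕ} (u v : Fin N → Bool) : ℕ :=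
  (Finset.univ.filter fun i : Fin N => u i ≠ v i).card

/-- Coordinatewise negation on the hypercube. -/
def negv {N : ℕ} (u : Fin N → Bool) : Fin N → Bool := fun i => !(u i)

/-- The rate matrix `Q_hyp` on `{-1,+1}^{2L-1}` with rate `a` across Hamming distance `1` and
to the antipode, rate `a'` across Hamming distances `2` and `2L-2`, zero otherwise, and
diagonal making rows sum to zero. -/
def Qhyp (L : ℕ) (a a' : ℝ) :
    Matrix (Fin (2 * L - 1) → Bool) (Fin (2 * L - 1) → Bool) ℝ :=
  fun u v =>
    if u = v then
      -(∑ w ∈ Finset.univ.filter (fun w => w ≠ u),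
        (if hamDist u w = 1 ∨ w = negv u then a
         else if hamDist u w = 2 ∨ hamDist u w = 2 * L - 2 then a' else 0))
    else
      if hamDist u v = 1 ∨ v = negv u then a
      else if hamDist u v = 2 ∨ hamDist u v = 2 * L - 2 then a' else 0

end SPMP

open SPMP

/-!
The ground states form a group under symmetric difference, spanned by the rows and columns of the
torus. Translating by a ground state is a symmetry of the dynamics, so `Q_𝒢(σ, τ)` depends only on
`σ ∆ τ`; and a ground state is left by a single flip, at rate `e^{-4β}`, so `Q_𝒢(σ, τ)` is `e^{-4β}`
times the sum over the flipped site of the probability that the flipped configuration next hits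
`𝒢` at `τ`.

After one flip the four defects are the corners of a bar of width one. Up to moves of higher
energy, negligible while `L ≤ e^{β/2}`, the length of the bar performs a symmetric walk which is
absorbed when the bar disappears or has become a whole line. Hence a flip leads across a line with
probability of order `1 / L`, and across `n ≤ 3` lines with probability at most `(38 / L) ^ n`.

* The `2L` lines together thus have rate of order `e^{-4β} L² / L`, shared equally by translation
  and reflection, so each of them has rate of order `e^{-4β}`.
* Sums of two lines have at least `L / 2` distinct translates, which together have rate
  `O(e^{-4β})`, so each has rate `O(e^{-4β} / L)`.
* All other ground states are at least three lines away, and have rate `O(e^{-4β} L² / L³)`.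

At `L = L_c` one has `e^{-4β} ≍ L⁻⁸`, and under `w` the lines become the unit vectors and the
all-ones vector, that is the nearest neighbours and the antipode. The choice `a' = 0` suffices.
-/

open scoped symmDiff Matrix

namespace SPMP

/-! ### Harmonic extensions for finite Markov chains -/

section MarkovChain

variable {α ι : Type*} [Fintype α] {Q : Matrix α α ℝ} {G : Set α} {f h h' : α → ℝ}

/-- Generators (rate matrices) of continuous-time Markov chains on a finite state space. -/
structure IsGenerator (Q : Matrix α α ℝ) : Prop where
  offDiag_nonneg : ∀ ⦃x y⦄, x ≠ y → 0 ≤ Q x y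
  row_sum : ∀ x, ∑ y, Q x y = 0

/-- The set `G` is accessible from every state of the chain with rates `Q`. -/
def LeadsTo (Q : Matrix α α ℝ) (G : Set α) : Prop :=
  ∀ x, ∃ y ∈ G, Relation.ReflTransGen (fun a b ↦ 0 < Q a b) x y

/-- `h` is the solution of the Dirichlet problem off `G` with boundary values `f` on `G`, that is
`h x = 𝔼_x[f(X_T)]` for `T` the hitting time of `G`. -/
structure IsHarmonicExt (Q : Matrix α α ℝ) (G : Set α) (f h : α → ℝ) : Prop where
  eqOn : Set.EqOn h f G
  harmonic : ∀ ⦃x⦄, x ∉ G → (Q *ᵥ h) x = 0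

namespace IsGenerator

theorem mulVec_apply (hQ : IsGenerator Q) (h : α → ℝ) (x : α) :
    (Q *ᵥ h) x = ∑ y, Q x y * (h y - h x) := by
  simp only [mul_sub, Finset.sum_sub_distrib, ← Finset.sum_mul, hQ.row_sum, zero_mul, sub_zero]
  rfl

theorem eq_of_subharmonic_of_isMax (hQ : IsGenerator Q) {x y : α} (hx : 0 ≤ (Q *ᵥ h) x)
    (hmax : ∀ z, h z ≤ h x) (hxy : 0 < Q x y) : h y = h x := by
  have hnonpos : ∀ z ∈ Finset.univ, Q x z * (h z - h x) ≤ 0 := fun z _ ↦ by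
    rcases eq_or_ne x z with rfl | hxz
    · simp
    · exact mul_nonpos_of_nonneg_of_nonpos (hQ.offDiag_nonneg hxz) (sub_nonpos.2 (hmax z))
  rw [hQ.mulVec_apply] at hx
  have hzero := (Finset.sum_eq_zero_iff_of_nonpos hnonpos).1
    (le_antisymm (Finset.sum_nonpos hnonpos) hx) y (Finset.mem_univ y)
  exact sub_eq_zero.1 ((mul_eq_zero.1 hzero).resolve_left hxy.ne')

theorem le_of_subharmonic (hQ : IsGenerator Q) (hG : LeadsTo Q G) {c : ℝ}
    (hsub : ∀ x ∉ G, 0 ≤ (Q *ᵥ h) x) (hle : ∀ x ∈ G, h x ≤ c) (x : α) : h x ≤ c := by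
  obtain ⟨m, -, hm⟩ := Finset.exists_max_image Finset.univ h ⟨x, Finset.mem_univ x⟩
  replace hm : ∀ z, h z ≤ h m := fun z ↦ hm z (Finset.mem_univ z)
  by_contra! hc
  have hmc : c < h m := hc.trans_le (hm x)
  obtain ⟨y, hyG, hpath⟩ := hG m
  have hym : h y = h m := by
    clear hyG
    induction hpath with
    | refl => rfl
    | @tail a b _ hab ih =>
      have haG : a ∉ G := fun haG ↦ (hle a haG).not_gt (ih ▸ hmc)
      rw [← ih]
      exact hQ.eq_of_subharmonic_of_isMax (hsub a haG) (fun z ↦ ih ▸ hm z) hab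
  exact (hle y hyG).not_gt (hym ▸ hmc)

theorem eq_zero_of_harmonic (hQ : IsGenerator Q) (hG : LeadsTo Q G)
    (hG0 : ∀ x ∈ G, h x = 0) (hh : ∀ x ∉ G, (Q *ᵥ h) x = 0) : h = 0 := by
  funext x
  refine le_antisymm (hQ.le_of_subharmonic hG (fun x hx ↦ (hh x hx).ge)
    (fun x hx ↦ (hG0 x hx).le) x) (neg_nonpos.1 ?_)
  refine hQ.le_of_subharmonic (h := -h) hG (fun x hx ↦ ?_) (fun x hx ↦ ?_) x
  · simp [Matrix.mulVec_neg, hh x hx]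
  · simp [hG0 x hx]

theorem exists_dirichlet_poisson (hQ : IsGenerator Q) (hG : LeadsTo Q G) (f : α → ℝ) :
    ∃ h : α → ℝ, (∀ x ∈ G, h x = f x) ∧ ∀ x ∉ G, (Q *ᵥ h) x = f x := by
  let T : (α → ℝ) →ₗ[ℝ] (α → ℝ) :=
    { toFun := fun h x ↦ if x ∈ G then h x else (Q *ᵥ h) x
      map_add' := fun h k ↦ by funext x; simp [Matrix.mulVec_add, ite_add_ite]
      map_smul' := fun r h ↦ by funext x; simp [Matrix.mulVec_smul] }
  have hT : ∀ h x, T h x = if x ∈ G then h x else (Q *ᵥ h) x := fun _ _ ↦ rfl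
  have hinj : Function.Injective T := (injective_iff_map_eq_zero T).2 fun h hTh ↦
    hQ.eq_zero_of_harmonic hG
      (fun x hx ↦ by simpa [hT, hx] using congrFun hTh x)
      (fun x hx ↦ by simpa [hT, hx] using congrFun hTh x)
  obtain ⟨h, hh⟩ := LinearMap.injective_iff_surjective.1 hinj f
  exact ⟨h, fun x hx ↦ by simp [← hh, hT, hx], fun x hx ↦ by simp [← hh, hT, hx]⟩

theorem exists_isHarmonicExt (hQ : IsGenerator Q) (hG : LeadsTo Q G) (f : α → ℝ) :
    ∃ h, IsHarmonicExt Q G f h := by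
  obtain ⟨h, hhG, hh⟩ := hQ.exists_dirichlet_poisson hG (G.indicator f)
  exact ⟨h, fun x hx ↦ by rw [hhG x hx, Set.indicator_of_mem hx],
    fun x hx ↦ by rw [hh x hx, Set.indicator_of_notMem hx]⟩

end IsGenerator

namespace IsHarmonicExt

theorem neg (hh : IsHarmonicExt Q G f h) : IsHarmonicExt Q G (-f) (-h) :=
  ⟨fun _ hx ↦ by simp [hh.eqOn hx], fun _ hx ↦ by simp [Matrix.mulVec_neg, hh.harmonic hx]⟩

theorem sum {s : Finset ι} {f h : ι → α → ℝ} (hh : ∀ i ∈ s, IsHarmonicExt Q G (f i) (h i)) :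
    IsHarmonicExt Q G (∑ i ∈ s, f i) (∑ i ∈ s, h i) := by
  refine ⟨fun x hx ↦ ?_, fun x hx ↦ ?_⟩
  · simpa only [Finset.sum_apply] using Finset.sum_congr rfl fun i hi ↦ (hh i hi).eqOn hx
  · rw [Matrix.mulVec_sum, Finset.sum_apply]
    exact Finset.sum_eq_zero fun i hi ↦ (hh i hi).harmonic hx

theorem le (hQ : IsGenerator Q) (hG : LeadsTo Q G) (hh : IsHarmonicExt Q G f h) {c : ℝ}
    (hf : ∀ x ∈ G, f x ≤ c) (x : α) : h x ≤ c :=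
  hQ.le_of_subharmonic hG (fun _ hx ↦ (hh.harmonic hx).ge)
    (fun _ hx ↦ (hh.eqOn hx).trans_le (hf _ hx)) x

theorem ge (hQ : IsGenerator Q) (hG : LeadsTo Q G) (hh : IsHarmonicExt Q G f h) {c : ℝ}
    (hf : ∀ x ∈ G, c ≤ f x) (x : α) : c ≤ h x :=
  neg_le_neg_iff.1 <| hh.neg.le hQ hG (fun x hx ↦ neg_le_neg (hf x hx)) x

theorem unique (hQ : IsGenerator Q) (hG : LeadsTo Q G) (hh : IsHarmonicExt Q G f h)
    (hh' : IsHarmonicExt Q G f h') : h = h' :=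
  sub_eq_zero.1 <| hQ.eq_zero_of_harmonic hG
    (fun x hx ↦ by simp [hh.eqOn hx, hh'.eqOn hx])
    (fun x hx ↦ by simp [Matrix.mulVec_sub, hh.harmonic hx, hh'.harmonic hx])

end IsHarmonicExt

section Trace

/-- The generator of the trace on `G` of the chain generated by `Q`, as a Schur complement. -/
def traceMatrix (Q : Matrix α α ℝ) (G : Set α) [DecidableEq ↥Gᶜ] [Fintype ↥Gᶜ] :
    Matrix G G ℝ :=
  (Matrix.of fun i j : G ↦ Q i j) -
    (Matrix.of fun (i : G) (j : ↥Gᶜ) ↦ Q i j) * (Matrix.of fun i j : ↥Gᶜ ↦ Q i j)⁻¹ *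
      Matrix.of fun (i : ↥Gᶜ) (j : G) ↦ Q i j

variable [Fintype ↥Gᶜ]

theorem mulVec_apply_eq_sum_add_sum [Fintype G] (h : α → ℝ) (x : α) :
    (Q *ᵥ h) x = ∑ y : G, Q x y * h y + ∑ y : ↥Gᶜ, Q x y * h y := by
  change ∑ y, Q x y * h y = _
  rw [← Fintype.sum_subtype_add_sum_subtype (· ∈ G)]
  congr!

variable [DecidableEq ↥Gᶜ]

theorem IsGenerator.isUnit_compl_block (hQ : IsGenerator Q) (hG : LeadsTo Q G) :
    IsUnit (Matrix.of fun i j : ↥Gᶜ ↦ Q i j) := by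
  have hfintype := Fintype.ofFinite G
  refine Matrix.mulVec_surjective_iff_isUnit.1 fun b ↦ ?_
  obtain ⟨h, hhG, hh⟩ := hQ.exists_dirichlet_poisson hG
    fun x ↦ if hx : x ∈ Gᶜ then b ⟨x, hx⟩ else 0
  refine ⟨fun j ↦ h j, funext fun i ↦ ?_⟩
  have hi : (Q *ᵥ h) i = b i := by rw [hh i i.2, dif_pos i.2]
  have hzero : ∑ y : G, Q i y * h y = 0 :=
    Finset.sum_eq_zero fun y _ ↦ by simp [hhG y y.2]
  rw [mulVec_apply_eq_sum_add_sum (G := G), hzero, zero_add] at hi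
  exact hi

theorem IsHarmonicExt.traceMatrix_apply [DecidableEq α] (hQ : IsGenerator Q)
    (hG : LeadsTo Q G) {i j : G} (hh : IsHarmonicExt Q G (Pi.single (j : α) 1) h) :
    traceMatrix Q G i j = (Q *ᵥ h) i := by
  have hfintype := Fintype.ofFinite G
  have hrow : ∀ x, (Q *ᵥ h) x = Q x j + ∑ y : ↥Gᶜ, Q x y * h y := fun x ↦ by
    have hsum : ∑ y : G, Q x y * h y = Q x j := by
      refine (Finset.sum_eq_single j (fun y _ hy ↦ ?_) (by simp)).trans ?_
      · rw [hh.eqOn y.2, Pi.single_eq_of_ne (Subtype.coe_injective.ne hy), mul_zero]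
      · rw [hh.eqOn j.2, Pi.single_eq_same, mul_one]
    rw [mulVec_apply_eq_sum_add_sum (G := G), hsum]
  set B : Matrix ↥Gᶜ ↥Gᶜ ℝ := Matrix.of fun i j ↦ Q i j
  set c : ↥Gᶜ → ℝ := fun x ↦ Q x j
  set k : ↥Gᶜ → ℝ := fun x ↦ h x
  have hBk : B *ᵥ k = -c := funext fun x ↦ by
    rw [Pi.neg_apply, eq_neg_iff_add_eq_zero, add_comm, ← hh.harmonic x.2]
    exact (hrow x).symm
  have hk : k = -(B⁻¹ *ᵥ c) := by
    have hdet := (Matrix.isUnit_iff_isUnit_det B).1 (hQ.isUnit_compl_block hG)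
    rw [← Matrix.mulVec_neg, ← hBk, Matrix.mulVec_mulVec, Matrix.nonsing_inv_mul _ hdet,
      Matrix.one_mulVec]
  calc traceMatrix Q G i j = Q i j - ∑ y : ↥Gᶜ, Q i y * (B⁻¹ *ᵥ c) y := by
        rw [traceMatrix, Matrix.mul_assoc]; rfl
    _ = (Q *ᵥ h) i := by
        rw [hrow, sub_eq_add_neg, ← Finset.sum_neg_distrib]
        refine congrArg _ (Finset.sum_congr rfl fun y _ ↦ ?_)
        rw [← mul_neg, ← Pi.neg_apply, ← hk]

end Trace

end MarkovChain

/-! ### Almost convex sequences -/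

theorem sub_le_of_almost_convex {a : ℕ → ℝ} {ε : ℝ} {n : ℕ} (h₀ : 5 * a 0 ≤ 4 * a 1 + 2 * ε)
    (h : ∀ k < n, 2 * a (k + 1) ≤ a k + a (k + 2) + ε) {m : ℕ} (hm : m ≤ n + 1) :
    a 0 * (m + 4) / 4 - ε * m ^ 2 / 2 ≤ a m := by
  have hincr : ∀ k ≤ n, a 0 / 4 - ε * (k + 1 / 2) ≤ a (k + 1) - a k := fun k hk ↦ by
    induction k with
    | zero => norm_num; linarith
    | succ k ih => push_cast; linarith [ih (by omega), h k (by omega)]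
  induction m with
  | zero => norm_num
  | succ m ih => push_cast; linarith [ih (by omega), hincr m (by omega)]

/-! ### The Glauber generator -/

variable {L : ℕ} {β : ℝ}

theorem flipP_ne (σ : ConfigP L) (x : Fin L × Fin L) : flipP L σ x ≠ σ := fun h ↦ by
  simpa [flipP] using congrFun h x

theorem flipP_symmDiff (σ A : ConfigP L) (x : Fin L × Fin L) :
    flipP L (σ ∆ A) x = flipP L σ x ∆ A := by
  funext z
  by_cases hz : z = x <;> simp [flipP, hz, Bool.symmDiff_eq_xor]

theorem metroRateP_pos (β : ℝ) (σ η : ConfigP L) : 0 < metroRateP L β σ η :=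
  lt_min one_pos (Real.exp_pos _)

theorem genP_apply (β : ℝ) (σ η : ConfigP L) :
    genP L β σ η = ∑ x, metroRateP L β σ (flipP L σ x) *
      ((if η = flipP L σ x then 1 else 0) - if η = σ then 1 else 0) := by
  rcases eq_or_ne η σ with rfl | hη
  · simp [genP, (flipP_ne η _).symm]
  · simp [genP, hη]

theorem genP_mulVec (β : ℝ) (h : ConfigP L → ℝ) (σ : ConfigP L) :
    (genP L β *ᵥ h) σ =
      ∑ x, metroRateP L β σ (flipP L σ x) * (h (flipP L σ x) - h σ) := by
  change ∑ η, genP L β σ η * h η = _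
  simp only [genP_apply, Finset.sum_mul]
  rw [Finset.sum_comm]
  refine Finset.sum_congr rfl fun x _ ↦ ?_
  simp only [mul_assoc, ← Finset.mul_sum]
  simp [sub_mul]

theorem isGenerator_genP (L : ℕ) (β : ℝ) : IsGenerator (genP L β) where
  offDiag_nonneg σ η hση := by
    rw [genP, if_neg hση.symm]
    exact Finset.sum_nonneg fun x _ ↦ by split_ifs <;> simp [(metroRateP_pos _ _ _).le]
  row_sum σ := by simpa [Matrix.mulVec, dotProduct] using genP_mulVec β (fun _ ↦ 1) σ

theorem genP_flipP_pos (β : ℝ) (σ : ConfigP L) (x : Fin L × Fin L) :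
    0 < genP L β σ (flipP L σ x) := by
  rw [genP, if_neg (flipP_ne σ x)]
  refine Finset.sum_pos' (fun y _ ↦ ?_) ⟨x, Finset.mem_univ x, by simp [metroRateP_pos]⟩
  split_ifs <;> simp [(metroRateP_pos _ _ _).le]

theorem reflTransGen_genP_bot (β : ℝ) (s : Finset (Fin L × Fin L)) (σ : ConfigP L)
    (hσ : ∀ z ∉ s, σ z = false) :
    Relation.ReflTransGen (fun σ η ↦ 0 < genP L β σ η) σ ⊥ := by
  induction s using Finset.induction_on generalizing σ with
  | empty =>
    obtain rfl : σ = ⊥ := funext fun z ↦ hσ z (Finset.notMem_empty z)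
    exact .refl
  | insert x s _ ih =>
    by_cases hx : σ x = false
    · exact ih σ fun z hz ↦ (em (z = x)).elim (fun h ↦ h ▸ hx) fun h ↦ hσ z (by simp [h, hz])
    · refine .head (genP_flipP_pos β σ x) (ih _ fun z hz ↦ ?_)
      by_cases hzx : z = x
      · simpa [flipP, hzx] using hx
      · simpa [flipP, hzx] using hσ z (by simp [hzx, hz])

/-! ### Defects -/

/-- Whether the plaquette at `y` is a defect, that is `p_y(σ) = -1`. -/
def defect (σ : ConfigP L) (y : Fin L × Fin L) : Bool :=
  ((σ y ^^ σ (fsucc y.1, y.2)) ^^ σ (y.1, fsucc y.2)) ^^ σ (fsucc y.1, fsucc y.2)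

theorem plaqP_eq_one_sub (σ : ConfigP L) (y : Fin L × Fin L) :
    plaqP L σ y = 1 - 2 * (defect σ y).toNat := by
  rw [plaqP, defect]
  cases σ y <;> cases σ (fsucc y.1, y.2) <;> cases σ (y.1, fsucc y.2) <;>
    cases σ (fsucc y.1, fsucc y.2) <;> norm_num [sval]

theorem hamP_eq (σ : ConfigP L) :
    hamP L σ = ∑ y, ((defect σ y).toNat : ℝ) - (L : ℝ) ^ 2 / 2 := by
  simp only [hamP, plaqP_eq_one_sub, Finset.sum_sub_distrib, ← Finset.mul_sum]
  simp
  ring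

theorem defect_symmDiff (σ A : ConfigP L) (y : Fin L × Fin L) :
    defect (σ ∆ A) y = (defect σ y ^^ defect A y) := by
  simp only [defect, Pi.symmDiff_apply, Bool.symmDiff_eq_xor, Bool.xor_assoc, Bool.xor_comm,
    Bool.xor_left_comm]

theorem defect_bot (y : Fin L × Fin L) : defect (⊥ : ConfigP L) y = false := rfl

theorem mem_groundP {σ : ConfigP L} : σ ∈ GroundP L ↔ ∀ y, defect σ y = false := by
  refine ⟨fun hσ y ↦ ?_, fun hσ η ↦ ?_⟩
  · have hle : ∑ y, ((defect σ y).toNat : ℝ) ≤ 0 := by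
      simpa [hamP_eq, defect_bot] using hσ ⊥
    have hzero := (Finset.sum_eq_zero_iff_of_nonneg fun _ _ ↦ Nat.cast_nonneg _).1
      (hle.antisymm (Finset.sum_nonneg fun _ _ ↦ Nat.cast_nonneg _)) y (Finset.mem_univ y)
    simpa using hzero
  · rw [hamP_eq, hamP_eq]
    gcongr with y
    simp [hσ y]

theorem bot_mem_groundP : (⊥ : ConfigP L) ∈ GroundP L := mem_groundP.2 defect_bot

theorem defect_symmDiff_of_mem {τ : ConfigP L} (hτ : τ ∈ GroundP L) (A : ConfigP L) :
    defect (τ ∆ A) = defect A := by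
  funext y
  rw [defect_symmDiff, mem_groundP.1 hτ y, Bool.false_xor]

theorem symmDiff_mem_groundP_iff {τ A : ConfigP L} (hτ : τ ∈ GroundP L) :
    τ ∆ A ∈ GroundP L ↔ A ∈ GroundP L := by
  rw [mem_groundP, mem_groundP, defect_symmDiff_of_mem hτ]

theorem leadsTo_groundP (L : ℕ) (β : ℝ) : LeadsTo (genP L β) (GroundP L) := fun σ ↦
  ⟨⊥, bot_mem_groundP, reflTransGen_genP_bot β Finset.univ σ (by simp)⟩

/-- The product of two subsets of the cycle, as a configuration. -/
def rect (a b : Fin L → Bool) : ConfigP L := fun z ↦ a z.1 && b z.2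

/-- The boundary edges of a subset `a` of the cycle; `i` stands for the edge `{i, i + 1}`. -/
def edgeBoundary (a : Fin L → Bool) (i : Fin L) : Bool := a i ^^ a (fsucc i)

theorem defect_rect (a b : Fin L → Bool) (y : Fin L × Fin L) :
    defect (rect a b) y = (edgeBoundary a y.1 && edgeBoundary b y.2) := by
  simp only [defect, rect, edgeBoundary]
  cases a y.1 <;> cases a (fsucc y.1) <;> cases b y.2 <;> cases b (fsucc y.2) <;> rfl

theorem toNat_defect_rect (a b : Fin L → Bool) (y : Fin L × Fin L) :
    (defect (rect a b) y).toNat = (edgeBoundary a y.1).toNat * (edgeBoundary b y.2).toNat := by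
  rw [defect_rect]
  cases edgeBoundary a y.1 <;> cases edgeBoundary b y.2 <;> rfl

theorem rect_symmDiff_left (a a' b : Fin L → Bool) : rect (a ∆ a') b = rect a b ∆ rect a' b := by
  funext z
  simp only [rect, Pi.symmDiff_apply, Bool.symmDiff_eq_xor]
  cases b z.2 <;> simp

/-! ### Arcs, bars and lines -/

/-- The arc `{i, i + 1, …, i + k - 1}` of the cycle. -/
def arc (i : Fin L) (k : ℕ) (x : Fin L) : Bool := decide ((x - i).val < k)

theorem arc_self (i : Fin L) : arc i L = ⊤ := by
  funext x
  simp [arc]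

/-- The segment of `k` consecutive sites starting at coordinate `i` of the row `x₂ = j`
(for `d = true`) or of the column `x₁ = j` (for `d = false`). -/
def bar (d : Bool) (i j : Fin L) (k : ℕ) : ConfigP L :=
  if d then rect (arc i k) (arc j 1) else rect (arc j 1) (arc i k)

/-- The row `x₂ = j` (for `d = true`) or the column `x₁ = j` (for `d = false`). -/
def line (d : Bool) (j : Fin L) : ConfigP L := if d then rect ⊤ (arc j 1) else rect (arc j 1) ⊤

theorem bar_self (d : Bool) (i j : Fin L) : bar d i j L = line d j := by
  simp only [line, bar, arc_self]

theorem edgeBoundary_top (i : Fin L) : edgeBoundary ⊤ i = false := rfl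

theorem line_mem_groundP (d : Bool) (j : Fin L) : line d j ∈ GroundP L := by
  refine mem_groundP.2 fun y ↦ ?_
  cases d <;> simp [line, defect_rect, edgeBoundary_top]

/-- The largest value of `h` at distance one bar of length `k` from `τ`. -/
def barSup (h : ConfigP L → ℝ) (τ : ConfigP L) (k : ℕ) : ℝ :=
  ⨆ p : Bool × Fin L × Fin L, h (τ ∆ bar p.1 p.2.1 p.2.2 k)

theorem le_barSup (h : ConfigP L → ℝ) (τ : ConfigP L) (d : Bool) (i j : Fin L) (k : ℕ) :
    h (τ ∆ bar d i j k) ≤ barSup h τ k :=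
  Finite.le_ciSup (fun p : Bool × Fin L × Fin L ↦ h (τ ∆ bar p.1 p.2.1 p.2.2 k)) (d, i, j)

/-- The set of all rows and columns. -/
def lines (L : ℕ) : Finset (ConfigP L) := Finset.univ.image fun p : Bool × Fin L ↦ line p.1 p.2

theorem mem_lines {A : ConfigP L} : A ∈ lines L ↔ ∃ d j, line d j = A := by simp [lines]

/-- The reflection of a configuration across the diagonal. -/
def reflect : Equiv.Perm (ConfigP L) := (Equiv.prodComm _ _).arrowCongr (Equiv.refl Bool)

theorem reflect_reflect (σ : ConfigP L) : reflect (reflect σ) = σ := rfl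

theorem reflect_symmDiff (σ A : ConfigP L) : reflect (σ ∆ A) = reflect σ ∆ reflect A := rfl

theorem reflect_bar (d : Bool) (i j : Fin L) (k : ℕ) : reflect (bar d i j k) = bar (!d) i j k := by
  funext z
  cases d <;> exact Bool.and_comm _ _

theorem reflect_line (d : Bool) (j : Fin L) : reflect (line d j) = line (!d) j := by
  rw [← bar_self d j, reflect_bar, bar_self]

theorem mem_lines_of_reflect_mem {A : ConfigP L} (hA : reflect A ∈ lines L) : A ∈ lines L := by
  obtain ⟨d, j, hj⟩ := mem_lines.1 hA
  exact mem_lines.2 ⟨!d, j, reflect.injective (by rw [reflect_line, Bool.not_not, hj])⟩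

/-! ### Symmetries -/

/-- A symmetry of the dynamics: a permutation of the configurations that preserves the energy and
maps single spin flips to single spin flips. -/
structure IsSymmetry (e : Equiv.Perm (ConfigP L)) (p : Equiv.Perm (Fin L × Fin L)) : Prop where
  hamP_apply : ∀ σ, hamP L (e σ) = hamP L σ
  apply_flipP : ∀ σ x, e (flipP L σ x) = flipP L (e σ) (p x)

namespace IsSymmetry

variable {e : Equiv.Perm (ConfigP L)} {p : Equiv.Perm (Fin L × Fin L)} {f h : ConfigP L → ℝ}

theorem genP_mulVec_comp (he : IsSymmetry e p) (β : ℝ) (h : ConfigP L → ℝ) (σ : ConfigP L) :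
    (genP L β *ᵥ (h ∘ e)) σ = (genP L β *ᵥ h) (e σ) := by
  rw [genP_mulVec, genP_mulVec]
  refine (Finset.sum_congr rfl fun x _ ↦ ?_).trans (Equiv.sum_comp p _)
  rw [metroRateP, metroRateP, ← he.apply_flipP, he.hamP_apply, he.hamP_apply, Function.comp_apply,
    Function.comp_apply]

theorem apply_mem_groundP_iff (he : IsSymmetry e p) {σ : ConfigP L} :
    e σ ∈ GroundP L ↔ σ ∈ GroundP L := by
  refine ⟨fun h η ↦ ?_, fun h η ↦ ?_⟩
  · simpa only [he.hamP_apply] using h (e η)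
  · simpa only [he.hamP_apply, ← he.hamP_apply (e.symm η), Equiv.apply_symm_apply]
      using h (e.symm η)

theorem isHarmonicExt_comp (he : IsSymmetry e p) (hh : IsHarmonicExt (genP L β) (GroundP L) f h) :
    IsHarmonicExt (genP L β) (GroundP L) (f ∘ e) (h ∘ e) where
  eqOn _ hσ := hh.eqOn (he.apply_mem_groundP_iff.2 hσ)
  harmonic σ hσ := by
    rw [he.genP_mulVec_comp, hh.harmonic (mt he.apply_mem_groundP_iff.1 hσ)]

end IsSymmetry

theorem isSymmetry_symmDiffLeft {τ : ConfigP L} (hτ : τ ∈ GroundP L) :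
    IsSymmetry (Function.Involutive.toPerm (τ ∆ ·) (symmDiff_symmDiff_cancel_left τ)) 1 where
  hamP_apply σ := by
    change hamP L (τ ∆ σ) = _
    rw [hamP_eq, hamP_eq, defect_symmDiff_of_mem hτ]
  apply_flipP σ x := by
    change τ ∆ flipP L σ x = flipP L (τ ∆ σ) x
    rw [symmDiff_comm τ, symmDiff_comm τ, flipP_symmDiff]

theorem isSymmetry_arrowCongr {p : Equiv.Perm (Fin L × Fin L)}
    (hp : ∀ σ y, defect (p.arrowCongr (Equiv.refl Bool) σ) (p y) = defect σ y) :
    IsSymmetry (p.arrowCongr (Equiv.refl Bool)) p where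
  hamP_apply σ := by
    rw [hamP_eq, hamP_eq, ← Equiv.sum_comp p]
    simp only [hp]
  apply_flipP σ x := by
    funext z
    simp [flipP, Equiv.symm_apply_eq]

theorem isSymmetry_reflect : IsSymmetry (L := L) reflect (Equiv.prodComm _ _) :=
  isSymmetry_arrowCongr fun σ y ↦ by
    simp [defect, Bool.xor_left_comm]

/-- Functions with values in `[-1, 1]` that are harmonic for the dynamics off the ground states. -/
structure IsBoundedHarmonic (β : ℝ) (h : ConfigP L → ℝ) : Prop where
  abs_le_one : ∀ σ, |h σ| ≤ 1
  harmonic : ∀ σ ∉ GroundP L, (genP L β *ᵥ h) σ = 0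

namespace IsBoundedHarmonic

variable {h : ConfigP L → ℝ}

theorem neg (hh : IsBoundedHarmonic β h) : IsBoundedHarmonic β (-h) :=
  ⟨fun σ ↦ by simpa using hh.abs_le_one σ,
    fun σ hσ ↦ by simp [Matrix.mulVec_neg, hh.harmonic σ hσ]⟩

theorem comp_reflect (hh : IsBoundedHarmonic β h) : IsBoundedHarmonic β (h ∘ reflect) :=
  ⟨fun σ ↦ hh.abs_le_one _, fun σ hσ ↦ by
    rw [isSymmetry_reflect.genP_mulVec_comp,
      hh.harmonic _ (mt isSymmetry_reflect.apply_mem_groundP_iff.1 hσ)]⟩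

end IsBoundedHarmonic

/-- A bound on the total rate, at a configuration with four defects, of the flips
that increase the energy: each of the `16` incidences between a defect and a site can create
one flip of cost `2`, and all other such flips have cost `4`. -/
def slow (L : ℕ) (β : ℝ) : ℝ := (L : ℝ) ^ 2 * Real.exp (-4 * β) + 16 * Real.exp (-2 * β)

/-- Side lengths up to the critical length `e^{β/2}`, with a constant that makes the error terms
small. -/
structure Subcritical (L : ℕ) (β : ℝ) : Prop where
  twenty_le : 20 ≤ L
  le_exp : (L : ℝ) ≤ Real.exp (β / 2)

namespace Subcritical

theorem twenty_le_cast (hL : Subcritical L β) : (20 : ℝ) ≤ L := by exact_mod_cast hL.twenty_le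

theorem nonneg (hL : Subcritical L β) : 0 ≤ β := by
  have hexp : 1 ≤ Real.exp (β / 2) := by linarith [hL.twenty_le_cast, hL.le_exp]
  linarith [Real.one_le_exp_iff.1 hexp]

theorem slow_le (hL : Subcritical L β) : slow L β ≤ 17 / (L : ℝ) ^ 4 := by
  have hpos : (0 : ℝ) < L := by linarith [hL.twenty_le_cast]
  have hexp : ∀ n : ℕ, Real.exp (-(n * (β / 2))) ≤ 1 / (L : ℝ) ^ n := fun n ↦ by
    rw [Real.exp_neg, Real.exp_nat_mul, ← one_div]
    exact one_div_le_one_div_of_le (by positivity) (pow_le_pow_left₀ hpos.le hL.le_exp n)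
  have h₄ := hexp 4
  have h₈ := hexp 8
  calc slow L β = (L : ℝ) ^ 2 * Real.exp (-((8 : ℕ) * (β / 2))) +
        16 * Real.exp (-((4 : ℕ) * (β / 2))) := by
        rw [slow]
        congr 3 <;> push_cast <;> ring
    _ ≤ (L : ℝ) ^ 2 * (1 / (L : ℝ) ^ 8) + 16 * (1 / (L : ℝ) ^ 4) := by gcongr
    _ ≤ 17 / (L : ℝ) ^ 4 := by
      rw [← sub_nonneg]
      have hdiff : 17 / (L : ℝ) ^ 4 - ((L : ℝ) ^ 2 * (1 / (L : ℝ) ^ 8) + 16 * (1 / (L : ℝ) ^ 4)) =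
        ((L : ℝ) ^ 2 - 1) / (L : ℝ) ^ 6 := by field_simp; ring
      rw [hdiff]
      exact div_nonneg (by nlinarith [hL.twenty_le_cast]) (by positivity)

theorem two_mul_mul_slow_le (hL : Subcritical L β) : 2 * L * slow L β ≤ 34 / (L : ℝ) ^ 3 := by
  have hpos : (0 : ℝ) < L := by linarith [hL.twenty_le_cast]
  calc 2 * L * slow L β ≤ 2 * L * (17 / (L : ℝ) ^ 4) := by gcongr; exact hL.slow_le
    _ = 34 / (L : ℝ) ^ 3 := by field_simp; norm_num

end Subcritical

/-! ### Rates of the trace chain -/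

/-- `hitProb β A σ` is the probability that the dynamics started at `σ` enters the ground states
at `A`. -/
def hitProb (β : ℝ) (A : ConfigP L) : ConfigP L → ℝ :=
  ((isGenerator_genP L β).exists_isHarmonicExt (leadsTo_groundP L β) (Pi.single A 1)).choose

theorem isHarmonicExt_hitProb (β : ℝ) (A : ConfigP L) :
    IsHarmonicExt (genP L β) (GroundP L) (Pi.single A 1) (hitProb β A) :=
  ((isGenerator_genP L β).exists_isHarmonicExt (leadsTo_groundP L β) (Pi.single A 1)).choose_spec

theorem isHarmonicExt_sum_hitProb (β : ℝ) (O : Finset (ConfigP L)) :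
    IsHarmonicExt (genP L β) (GroundP L) (fun σ ↦ if σ ∈ O then 1 else 0)
      (∑ A ∈ O, hitProb β A) := by
  convert IsHarmonicExt.sum fun A (_ : A ∈ O) ↦ isHarmonicExt_hitProb β A with σ
  rw [Finset.sum_apply, Finset.sum_pi_single]

theorem sum_hitProb_of_mem_groundP (O : Finset (ConfigP L)) {σ : ConfigP L} (hσ : σ ∈ GroundP L) :
    (∑ A ∈ O, hitProb β A) σ = if σ ∈ O then 1 else 0 := (isHarmonicExt_sum_hitProb β O).eqOn hσ

theorem sum_hitProb_nonneg (β : ℝ) (O : Finset (ConfigP L)) (σ : ConfigP L) :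
    0 ≤ (∑ A ∈ O, hitProb β A) σ :=
  (isHarmonicExt_sum_hitProb β O).ge (isGenerator_genP L β) (leadsTo_groundP L β)
    (fun _ _ ↦ by split_ifs <;> norm_num) σ

theorem isBoundedHarmonic_sum_hitProb (β : ℝ) (O : Finset (ConfigP L)) :
    IsBoundedHarmonic β (∑ A ∈ O, hitProb β A) where
  abs_le_one σ := by
    rw [abs_of_nonneg (sum_hitProb_nonneg β O σ)]
    exact (isHarmonicExt_sum_hitProb β O).le (isGenerator_genP L β) (leadsTo_groundP L β)
      (fun _ _ ↦ by split_ifs <;> norm_num) σ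
  harmonic _ hσ := (isHarmonicExt_sum_hitProb β O).harmonic hσ

/-- The rate of the trace chain from the ground state `⊥` to the ground state `A`; by
`traceGen_apply` it is also the rate from `σ` to `σ ∆ A`. -/
def traceRate (β : ℝ) (A : ConfigP L) : ℝ := (genP L β *ᵥ hitProb β A) ⊥

theorem IsSymmetry.genP_mulVec_hitProb {e : Equiv.Perm (ConfigP L)}
    {p : Equiv.Perm (Fin L × Fin L)} (he : IsSymmetry e p) (β : ℝ) (A σ : ConfigP L) :
    (genP L β *ᵥ hitProb β (e A)) (e σ) = (genP L β *ᵥ hitProb β A) σ := by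
  have hsingle : (Pi.single (e A) 1 : ConfigP L → ℝ) ∘ e = Pi.single A 1 := by
    funext η
    simp [Pi.single_apply]
  have hcomp := he.isHarmonicExt_comp (isHarmonicExt_hitProb β (e A))
  rw [hsingle] at hcomp
  rw [← he.genP_mulVec_comp, hcomp.unique (isGenerator_genP L β) (leadsTo_groundP L β)
    (isHarmonicExt_hitProb β A)]

theorem traceGen_apply (σ τ : GroundP L) : traceGen L β σ τ = traceRate β (σ.1 ∆ τ.1) := by
  have htrace := (isHarmonicExt_hitProb β τ.1).traceMatrix_apply (isGenerator_genP L β)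
    (leadsTo_groundP L β) (i := σ)
  have hsymm : (genP L β *ᵥ hitProb β (σ.1 ∆ (σ.1 ∆ τ.1))) (σ.1 ∆ ⊥) = traceRate β (σ.1 ∆ τ.1) :=
    (isSymmetry_symmDiffLeft σ.2).genP_mulVec_hitProb β _ ⊥
  rw [symmDiff_symmDiff_cancel_left, symmDiff_bot] at hsymm
  exact htrace.trans hsymm

theorem traceRate_reflect (β : ℝ) (A : ConfigP L) : traceRate β (reflect A) = traceRate β A :=
  isSymmetry_reflect.genP_mulVec_hitProb β A ⊥

section Torus

open scoped Fin.CommRing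

variable [NeZero L] {k : ℕ}

theorem fsucc_eq_add_one (i : Fin L) : fsucc i = i + 1 := by
  ext
  simp [fsucc, Fin.val_add]

theorem natCast_ne_zero (hk : 0 < k) (hkL : k < L) : (k : Fin L) ≠ 0 := fun h ↦
  Nat.not_dvd_of_pos_of_lt hk hkL (Fin.natCast_eq_zero.1 h)

theorem arc_one (i x : Fin L) : arc i 1 x = decide (x = i) := by
  simp [arc, sub_eq_zero]

theorem arc_succ (i : Fin L) (hk : k < L) : arc i (k + 1) = arc i k ∆ arc (i + k) 1 := by
  funext x
  have hx : x = i + k ↔ (x - i).val = k := by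
    rw [add_comm, ← sub_eq_iff_eq_add, Fin.ext_iff, Fin.val_natCast, Nat.mod_eq_of_lt hk]
  simp only [Pi.symmDiff_apply, Bool.symmDiff_eq_xor, arc_one, hx]
  simp only [arc]
  grind

theorem arc_succ_left (i : Fin L) (hk : k < L) : arc i (k + 1) = arc (i + 1) k ∆ arc i 1 := by
  induction k with
  | zero =>
    funext x
    simp [arc]
  | succ k ih =>
    rw [arc_succ i hk, ih (by omega), arc_succ (i + 1) (k := k) (by omega), Nat.cast_succ,
      add_right_comm i 1, ← add_assoc]
    exact symmDiff_right_comm _ _ _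

theorem edgeBoundary_arc (i y : Fin L) (hk : 0 < k) (hkL : k < L) :
    (edgeBoundary (arc i k) y).toNat =
      (if y = i - 1 then 1 else 0) + if y = i + k - 1 then 1 else 0 := by
  have hshift : arc i k (fsucc y) = arc (i - 1) k y := by
    simp only [arc, fsucc_eq_add_one]
    congr! 3
    ring
  have hends := congrFun ((arc_succ_left (i - 1) hkL).symm.trans (arc_succ (i - 1) hkL)) y
  have hne : i - 1 ≠ i + k - 1 := fun h ↦ natCast_ne_zero hk hkL (by linear_combination -h)
  rw [sub_add_cancel, sub_add_eq_add_sub] at hends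
  simp only [Pi.symmDiff_apply, Bool.symmDiff_eq_xor, arc_one] at hends
  rw [edgeBoundary, hshift]
  grind

theorem flipP_eq_symmDiff_rect (σ : ConfigP L) (x : Fin L × Fin L) :
    flipP L σ x = σ ∆ rect (arc x.1 1) (arc x.2 1) := by
  funext z
  by_cases h₁ : z.1 = x.1 <;> by_cases h₂ : z.2 = x.2 <;>
    simp [flipP, rect, arc_one, Bool.symmDiff_eq_xor, Prod.ext_iff, h₁, h₂]

/-! ### Energy and rates of a spin flip -/

/-- The number of defects among the four plaquettes containing the site `x`. -/
def defectsAround (σ : ConfigP L) (x : Fin L × Fin L) : ℕ :=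
  (defect σ x).toNat + (defect σ (x.1 - 1, x.2)).toNat + (defect σ (x.1, x.2 - 1)).toNat +
    (defect σ (x.1 - 1, x.2 - 1)).toNat

/-- The number of boundary edges of `a` at the site `i`. -/
def edgesAround (a : Fin L → Bool) (i : Fin L) : ℕ :=
  (edgeBoundary a i).toNat + (edgeBoundary a (i - 1)).toNat

theorem defectsAround_rect (a b : Fin L → Bool) (x : Fin L × Fin L) :
    defectsAround (rect a b) x = edgesAround a x.1 * edgesAround b x.2 := by
  simp only [defectsAround, toNat_defect_rect, edgesAround]
  ring

theorem sum_edgesAround (a : Fin L → Bool) :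
    ∑ i, edgesAround a i = 2 * ∑ i, (edgeBoundary a i).toNat := by
  have hshift := Equiv.sum_comp (Equiv.subRight (1 : Fin L)) fun i ↦ (edgeBoundary a i).toNat
  simp only [Equiv.subRight_apply] at hshift
  simp only [edgesAround, Finset.sum_add_distrib, hshift, two_mul]

theorem hamP_flipP_sub (hL : 2 ≤ L) (σ : ConfigP L) (x : Fin L × Fin L) :
    hamP L (flipP L σ x) - hamP L σ = 4 - 2 * defectsAround σ x := by
  have hedge : ∀ i y : Fin L, ((edgeBoundary (arc i 1) y).toNat : ℝ) =
      (if y = i then 1 else 0) + if y = i - 1 then 1 else 0 := fun i y ↦ by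
    rw [edgeBoundary_arc i y one_pos hL]
    push_cast
    rw [add_sub_cancel_right, add_comm]
  have hterm : ∀ y, ((defect (flipP L σ x) y).toNat : ℝ) - (defect σ y).toNat =
      (1 - 2 * (defect σ y).toNat) *
        ((edgeBoundary (arc x.1 1) y.1).toNat * (edgeBoundary (arc x.2 1) y.2).toNat) := fun y ↦ by
    rw [flipP_eq_symmDiff_rect, defect_symmDiff, ← Nat.cast_mul, ← toNat_defect_rect]
    cases defect σ y <;> cases defect (rect (arc x.1 1) (arc x.2 1)) y <;> norm_num
  rw [hamP_eq, hamP_eq, sub_sub_sub_cancel_right, ← Finset.sum_sub_distrib]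
  simp only [hterm, hedge, Fintype.sum_prod_type]
  simp [mul_add, Finset.sum_add_distrib, defectsAround]
  ring

theorem metroRateP_flipP (hL : 2 ≤ L) (β : ℝ) (σ : ConfigP L) (x : Fin L × Fin L) :
    metroRateP L β σ (flipP L σ x) =
      min 1 (Real.exp (-β * (4 - 2 * defectsAround σ x))) := by
  rw [metroRateP, hamP_flipP_sub hL]

theorem metroRateP_flipP_of_two_le (hL : 2 ≤ L) (hβ : 0 ≤ β) {σ : ConfigP L} {x : Fin L × Fin L}
    (hx : 2 ≤ defectsAround σ x) : metroRateP L β σ (flipP L σ x) = 1 := by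
  have hx' : (2 : ℝ) ≤ defectsAround σ x := by exact_mod_cast hx
  rw [metroRateP_flipP hL, min_eq_left (Real.one_le_exp (by nlinarith))]

theorem metroRateP_flipP_le_of_lt_two (hL : 2 ≤ L) {σ : ConfigP L} {x : Fin L × Fin L}
    (hx : defectsAround σ x < 2) :
    metroRateP L β σ (flipP L σ x) ≤
      Real.exp (-4 * β) + defectsAround σ x * Real.exp (-2 * β) := by
  rw [metroRateP_flipP hL]
  refine (min_le_right _ _).trans ?_
  interval_cases defectsAround σ x
  · simp [mul_comm]
  · have hrate : -β * (4 - 2 * ((1 : ℕ) : ℝ)) = -2 * β := by push_cast; ring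
    rw [hrate, Nat.cast_one, one_mul]
    exact le_add_of_nonneg_left (Real.exp_pos _).le

theorem genP_mulVec_of_mem_groundP (hL : 2 ≤ L) (hβ : 0 ≤ β) {τ : ConfigP L}
    (hτ : τ ∈ GroundP L) (h : ConfigP L → ℝ) :
    (genP L β *ᵥ h) τ = Real.exp (-4 * β) * ∑ x, (h (flipP L τ x) - h τ) := by
  have hrate : ∀ x, metroRateP L β τ (flipP L τ x) = Real.exp (-4 * β) := fun x ↦ by
    rw [metroRateP_flipP hL, min_eq_right (Real.exp_le_one_iff.2 _)] <;>
      simp [defectsAround, mem_groundP.1 hτ, mul_comm, hβ]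
  rw [genP_mulVec, Finset.mul_sum]
  exact Finset.sum_congr rfl fun x _ ↦ by rw [hrate]

theorem genP_mulVec_rect_le (hL : 2 ≤ L) (hβ : 0 ≤ β) {h : ConfigP L → ℝ} (hh : ∀ σ, |h σ| ≤ 1)
    {η : ConfigP L} {a b : Fin L → Bool} (hη : defect η = defect (rect a b))
    (ha : ∑ i, (edgeBoundary a i).toNat = 2) (hb : ∑ i, (edgeBoundary b i).toNat = 2) :
    (genP L β *ᵥ h) η ≤
      ∑ x with 2 ≤ edgesAround a x.1 * edgesAround b x.2, (h (flipP L η x) - h η) +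
        2 * slow L β := by
  have hn : ∀ x, edgesAround a x.1 * edgesAround b x.2 = defectsAround η x := fun x ↦ by
    rw [← defectsAround_rect, defectsAround, defectsAround, hη]
  have htotal : ∑ x, (defectsAround η x : ℝ) = 16 := by
    simp only [← hn, Fintype.sum_prod_type, ← Nat.cast_sum]
    rw [← Finset.sum_mul_sum, sum_edgesAround, sum_edgesAround, ha, hb]
    norm_num
  have hterm : ∀ x, metroRateP L β η (flipP L η x) * (h (flipP L η x) - h η) ≤
      (if 2 ≤ defectsAround η x then h (flipP L η x) - h η else 0) +
        2 * (Real.exp (-4 * β) + defectsAround η x * Real.exp (-2 * β)) := fun x ↦ by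
    split_ifs with hx
    · rw [metroRateP_flipP_of_two_le hL hβ hx, one_mul]
      exact le_add_of_nonneg_right (by positivity)
    · have hdiff : h (flipP L η x) - h η ≤ 2 := by
        linarith [(abs_le.1 (hh (flipP L η x))).2, (abs_le.1 (hh η)).1]
      calc _ ≤ metroRateP L β η (flipP L η x) * 2 :=
            mul_le_mul_of_nonneg_left hdiff (metroRateP_pos _ _ _).le
        _ ≤ _ := by linarith [metroRateP_flipP_le_of_lt_two (β := β) hL (not_le.1 hx)]
  rw [genP_mulVec]
  refine (Finset.sum_le_sum fun x _ ↦ hterm x).trans_eq ?_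
  simp only [hn]
  rw [Finset.sum_add_distrib, ← Finset.mul_sum, Finset.sum_add_distrib, ← Finset.sum_mul, htotal,
    ← Finset.sum_filter]
  simp [slow, pow_two]

/-! ### Flips at the ends of a bar -/

theorem flipP_eq_symmDiff_bar (σ : ConfigP L) (i j : Fin L) :
    flipP L σ (i, j) = σ ∆ bar true i j 1 := flipP_eq_symmDiff_rect σ (i, j)

theorem flipP_symmDiff_bar_right (τ : ConfigP L) (i j : Fin L) (hk : k < L) :
    flipP L (τ ∆ bar true i j k) (i + k, j) = τ ∆ bar true i j (k + 1) := by
  rw [flipP_eq_symmDiff_bar, symmDiff_assoc]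
  simp only [bar, if_true, arc_succ i hk, rect_symmDiff_left]

theorem flipP_symmDiff_bar_left (τ : ConfigP L) (i j : Fin L) (hk : k < L) :
    flipP L (τ ∆ bar true (i + 1) j k) (i, j) = τ ∆ bar true i j (k + 1) := by
  rw [flipP_eq_symmDiff_bar, symmDiff_assoc]
  simp only [bar, if_true, arc_succ_left i hk, rect_symmDiff_left]

theorem flipP_flipP (σ : ConfigP L) (x : Fin L × Fin L) : flipP L (flipP L σ x) x = σ := by
  rw [flipP_eq_symmDiff_rect, flipP_eq_symmDiff_rect, symmDiff_symmDiff_cancel_right]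

theorem sum_edgeBoundary_arc (i : Fin L) (hk : 0 < k) (hkL : k < L) :
    ∑ y, (edgeBoundary (arc i k) y).toNat = 2 := by
  simp [edgeBoundary_arc i _ hk hkL, Finset.sum_add_distrib]

theorem edgesAround_arc (i x : Fin L) (hk : 0 < k) (hkL : k < L) :
    edgesAround (arc i k) x = ((if x = i - 1 then 1 else 0) + if x = i then 1 else 0) +
      ((if x = i + k - 1 then 1 else 0) + if x = i + k then 1 else 0) := by
  simp only [edgesAround, edgeBoundary_arc i _ hk hkL, sub_left_inj]
  ring

theorem edgesAround_arc_one (hL : 3 ≤ L) (j y : Fin L) :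
    edgesAround (arc j 1) y = if y = j then 2 else if y = j - 1 ∨ y = j + 1 then 1 else 0 := by
  have h₁ : ((1 : ℕ) : Fin L) ≠ 0 := natCast_ne_zero one_pos (by omega)
  have h₂ : ((2 : ℕ) : Fin L) ≠ 0 := natCast_ne_zero two_pos (by omega)
  push_cast at h₁ h₂
  have hp : j - 1 ≠ j := fun h ↦ h₁ (by linear_combination -h)
  have hs : j + 1 ≠ j := fun h ↦ h₁ (by linear_combination h)
  have hps : j - 1 ≠ j + 1 := fun h ↦ h₂ (by linear_combination -h)
  rw [edgesAround_arc j y one_pos (by omega), Nat.cast_one, add_sub_cancel_right]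
  grind

/-- The sites next to the two ends of an arc. -/
def arcEnds (i : Fin L) (k : ℕ) : Finset (Fin L) := {i - 1, i + k, i, i + k - 1}

section ArcEnds

variable (i : Fin L) (hk : 2 ≤ k) (hkL : k + 2 ≤ L)
include hk hkL

theorem arcEnds_pairwise_ne :
    i - 1 ∉ ({i + (k : Fin L), i, i + k - 1} : Finset (Fin L)) ∧
      i + (k : Fin L) ∉ ({i, i + k - 1} : Finset (Fin L)) ∧ i ≠ i + k - 1 := by
  obtain ⟨m, rfl⟩ : ∃ m, k = m + 1 := ⟨k - 1, by omega⟩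
  have h₀ : (m : Fin L) ≠ 0 := natCast_ne_zero (by omega) (by omega)
  have h₁ : ((1 : ℕ) : Fin L) ≠ 0 := natCast_ne_zero one_pos (by omega)
  have h₂ : ((m + 1 : ℕ) : Fin L) ≠ 0 := natCast_ne_zero (by omega) (by omega)
  have h₃ : ((m + 2 : ℕ) : Fin L) ≠ 0 := natCast_ne_zero (by omega) (by omega)
  push_cast at h₁ h₂ h₃ ⊢
  simp only [Finset.mem_insert, Finset.mem_singleton, not_or]
  refine ⟨⟨fun h ↦ h₃ ?_, fun h ↦ h₁ ?_, fun h ↦ h₂ ?_⟩, ⟨fun h ↦ h₂ ?_, fun h ↦ h₁ ?_⟩,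
    fun h ↦ h₀ ?_⟩
  · linear_combination -h
  · linear_combination -h
  · linear_combination -h
  · linear_combination h
  · linear_combination h
  · linear_combination -h

theorem sum_arcEnds (f : Fin L → ℝ) :
    ∑ x ∈ arcEnds i k, f x = f (i - 1) + (f (i + k) + (f i + f (i + k - 1))) := by
  obtain ⟨h₁, h₂, h₃⟩ := arcEnds_pairwise_ne i hk hkL
  rw [arcEnds, Finset.sum_insert h₁, Finset.sum_insert h₂, Finset.sum_pair h₃]

theorem edgesAround_arc_eq_ite (x : Fin L) :
    edgesAround (arc i k) x = if x ∈ arcEnds i k then 1 else 0 := by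
  have h := arcEnds_pairwise_ne i hk hkL
  rw [edgesAround_arc i x (by omega) (by omega), arcEnds]
  simp only [Finset.mem_insert, Finset.mem_singleton] at h ⊢
  grind

theorem filter_two_le_edgesAround_arc (j : Fin L) :
    ({x | 2 ≤ edgesAround (arc i k) x.1 * edgesAround (arc j 1) x.2} : Finset (Fin L × Fin L)) =
      arcEnds i k ×ˢ {j} := by
  ext x
  rw [Finset.mem_filter, Finset.mem_product, Finset.mem_singleton,
    edgesAround_arc_eq_ite i hk hkL, edgesAround_arc_one (by omega)]
  grind

end ArcEnds

/-! ### Harmonic functions on bars -/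

theorem symmDiff_bar_notMem_groundP {τ : ConfigP L} (hτ : τ ∈ GroundP L) (d : Bool) (i j : Fin L)
    (hk : 0 < k) (hkL : k < L) : τ ∆ bar d i j k ∉ GroundP L := fun hmem ↦ by
  have hedge : ∀ i : Fin L, ∀ m, 0 < m → m < L → edgeBoundary (arc i m) (i - 1) = true :=
    fun i m hm hmL ↦ Bool.toNat_eq_one.1 <| (Bool.toNat_le _).antisymm <| by
      rw [edgeBoundary_arc i _ hm hmL, if_pos rfl]
      exact Nat.le_add_right _ _
  have hdefect := mem_groundP.1 ((symmDiff_mem_groundP_iff hτ).1 hmem)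
  cases d
  · simpa [bar, defect_rect, hedge, hk, hkL, hk.trans_le, show 1 < L by omega]
      using hdefect (j - 1, i - 1)
  · simpa [bar, defect_rect, hedge, hk, hkL, show 1 < L by omega] using hdefect (i - 1, j - 1)

theorem filter_two_le_edgesAround_arc_one (hL : 3 ≤ L) (i j : Fin L) :
    ({x | 2 ≤ edgesAround (arc i 1) x.1 * edgesAround (arc j 1) x.2} : Finset (Fin L × Fin L)) =
      {(i, j), (i - 1, j), (i + 1, j), (i, j - 1), (i, j + 1)} := by
  ext x
  rw [Finset.mem_filter, edgesAround_arc_one hL, edgesAround_arc_one hL]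
  simp only [Finset.mem_insert, Finset.mem_singleton, Prod.ext_iff]
  grind

namespace IsBoundedHarmonic

variable {h : ConfigP L → ℝ} {τ : ConfigP L}

theorem sum_flipP_bar_nonneg (hh : IsBoundedHarmonic β h) (hβ : 0 ≤ β) (hτ : τ ∈ GroundP L)
    (i j : Fin L) (hk : 0 < k) (hkL : k < L) :
    0 ≤ ∑ x with 2 ≤ edgesAround (arc i k) x.1 * edgesAround (arc j 1) x.2,
      (h (flipP L (τ ∆ bar true i j k) x) - h (τ ∆ bar true i j k)) + 2 * slow L β := by
  rw [← hh.harmonic _ (symmDiff_bar_notMem_groundP hτ true i j hk hkL)]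
  exact genP_mulVec_rect_le (by omega) hβ hh.abs_le_one (defect_symmDiff_of_mem hτ _)
    (sum_edgeBoundary_arc i hk hkL) (sum_edgeBoundary_arc j one_pos (by omega))

theorem five_mul_bar_one_le (hh : IsBoundedHarmonic β h) (hβ : 0 ≤ β) (hL : 3 ≤ L)
    (hτ : τ ∈ GroundP L) (i j : Fin L) :
    5 * h (τ ∆ bar true i j 1) ≤ h τ +
      ((h (τ ∆ bar true (i - 1) j 2) + h (τ ∆ bar true i j 2)) +
        (h (τ ∆ bar false (j - 1) i 2) + h (τ ∆ bar false j i 2))) + 2 * slow L β := by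
  have h₁ : ((1 : ℕ) : Fin L) ≠ 0 := natCast_ne_zero one_pos (by omega)
  have h₂ : ((2 : ℕ) : Fin L) ≠ 0 := natCast_ne_zero two_pos (by omega)
  push_cast at h₁ h₂
  have hpred : ∀ i : Fin L, i ≠ i - 1 := fun i h ↦ h₁ (by linear_combination h)
  have hsucc : ∀ i : Fin L, i ≠ i + 1 := fun i h ↦ h₁ (by linear_combination -h)
  have hpredsucc : ∀ i : Fin L, i - 1 ≠ i + 1 := fun i h ↦ h₂ (by linear_combination -h)
  have hcenter : flipP L (τ ∆ bar true i j 1) (i, j) = τ := by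
    rw [← flipP_eq_symmDiff_bar, flipP_flipP]
  have hleft := flipP_symmDiff_bar_left τ (i - 1) j (k := 1) (by omega)
  have hright := flipP_symmDiff_bar_right τ i j (k := 1) (by omega)
  have hdown : flipP L (τ ∆ bar true i j 1) (i, j - 1) = τ ∆ bar false (j - 1) i 2 := by
    have h := congrArg reflect (flipP_symmDiff_bar_left (reflect τ) (j - 1) i (k := 1) (by omega))
    rwa [isSymmetry_reflect.apply_flipP, sub_add_cancel, reflect_symmDiff, reflect_symmDiff,
      reflect_reflect, reflect_bar, reflect_bar] at h
  have hup : flipP L (τ ∆ bar true i j 1) (i, j + 1) = τ ∆ bar false j i 2 := by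
    have h := congrArg reflect (flipP_symmDiff_bar_right (reflect τ) j i (k := 1) (by omega))
    rwa [isSymmetry_reflect.apply_flipP, Nat.cast_one, reflect_symmDiff, reflect_symmDiff,
      reflect_reflect, reflect_bar, reflect_bar] at h
  rw [sub_add_cancel] at hleft
  rw [Nat.cast_one] at hright
  have hsum := hh.sum_flipP_bar_nonneg hβ hτ i j one_pos (by omega)
  rw [filter_two_le_edgesAround_arc_one hL, Finset.sum_insert, Finset.sum_insert,
    Finset.sum_insert, Finset.sum_pair, hcenter, hleft, hright, hdown, hup] at hsum
  · linarith
  all_goals simp [hpred, hsucc, hpredsucc, (hpred _).symm, (hsucc _).symm]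

theorem four_mul_bar_true_le (hh : IsBoundedHarmonic β h) (hβ : 0 ≤ β) (hτ : τ ∈ GroundP L)
    (i j : Fin L) (hk : 0 < k) (hkL : k + 3 ≤ L) :
    4 * h (τ ∆ bar true i j (k + 1)) ≤
      (h (τ ∆ bar true (i + 1) j k) + h (τ ∆ bar true i j k)) +
        (h (τ ∆ bar true (i - 1) j (k + 2)) + h (τ ∆ bar true i j (k + 2))) + 2 * slow L β := by
  have hlast : i + ((k + 1 : ℕ) : Fin L) - 1 = i + k := by push_cast; ring
  have hgrow := flipP_symmDiff_bar_left τ (i - 1) j (k := k + 1) (by omega)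
  have hshrink_left := congrArg (flipP L · (i, j))
    (flipP_symmDiff_bar_left τ i j (k := k) (by omega))
  have hshrink_right := congrArg (flipP L · (i + (k : Fin L), j))
    (flipP_symmDiff_bar_right τ i j (k := k) (by omega))
  simp only [flipP_flipP] at hshrink_left hshrink_right
  rw [sub_add_cancel] at hgrow
  have hsum := hh.sum_flipP_bar_nonneg hβ hτ i j (k := k + 1) (by omega) (by omega)
  rw [filter_two_le_edgesAround_arc i (by omega) hkL j, Finset.sum_product,
    sum_arcEnds i (by omega) hkL] at hsum
  simp only [Finset.sum_singleton, hlast, hgrow, ← hshrink_left, ← hshrink_right,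
    flipP_symmDiff_bar_right τ i j (k := k + 1) (by omega)] at hsum
  linarith

theorem four_mul_bar_le (hh : IsBoundedHarmonic β h) (hβ : 0 ≤ β) (hτ : τ ∈ GroundP L)
    (d : Bool) (i j : Fin L) (hk : 0 < k) (hkL : k + 3 ≤ L) :
    4 * h (τ ∆ bar d i j (k + 1)) ≤
      (h (τ ∆ bar d (i + 1) j k) + h (τ ∆ bar d i j k)) +
        (h (τ ∆ bar d (i - 1) j (k + 2)) + h (τ ∆ bar d i j (k + 2))) + 2 * slow L β := by
  cases d with
  | true => exact hh.four_mul_bar_true_le hβ hτ i j hk hkL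
  | false =>
    simpa only [Function.comp_apply, reflect_symmDiff, reflect_reflect, reflect_bar, Bool.not_true]
      using hh.comp_reflect.four_mul_bar_true_le hβ
        (isSymmetry_reflect.apply_mem_groundP_iff.2 hτ) i j hk hkL

end IsBoundedHarmonic

theorem exists_symmDiff_bar_eq_flipP_line (τ : ConfigP L) (d : Bool) (i j : Fin L) :
    ∃ x, τ ∆ bar d i j (L - 1) = flipP L (τ ∆ line d j) x := by
  have hrow : ∀ σ : ConfigP L, ∃ x, σ ∆ bar true i j (L - 1) = flipP L (σ ∆ line true j) x :=
    fun σ ↦ by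
      refine ⟨(i + ((L - 1 : ℕ) : Fin L), j), ?_⟩
      have hlast := flipP_symmDiff_bar_right σ i j (k := L - 1) (Nat.pred_lt (NeZero.ne L))
      rw [Nat.sub_one_add_one (NeZero.ne L), bar_self] at hlast
      rw [← hlast, flipP_flipP]
  cases d with
  | true => exact hrow τ
  | false =>
    obtain ⟨x, hx⟩ := hrow (reflect τ)
    refine ⟨x.swap, ?_⟩
    have hreflect := congrArg reflect hx
    rwa [isSymmetry_reflect.apply_flipP, reflect_symmDiff, reflect_symmDiff, reflect_reflect,
      reflect_bar, reflect_line] at hreflect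

theorem exists_eq_barSup (h : ConfigP L → ℝ) (τ : ConfigP L) (k : ℕ) :
    ∃ d i j, h (τ ∆ bar d i j k) = barSup h τ k := by
  obtain ⟨⟨d, i, j⟩, hp⟩ := exists_eq_ciSup_of_finite
    (f := fun p : Bool × Fin L × Fin L ↦ h (τ ∆ bar p.1 p.2.1 p.2.2 k))
  exact ⟨d, i, j, hp⟩

namespace IsBoundedHarmonic

variable {h : ConfigP L → ℝ} {τ : ConfigP L}

theorem five_mul_barSup_one_le (hh : IsBoundedHarmonic β h) (hβ : 0 ≤ β) (hL : 3 ≤ L)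
    (hτ : τ ∈ GroundP L) :
    5 * barSup h τ 1 ≤ h τ + 4 * barSup h τ 2 + 2 * slow L β := by
  obtain ⟨i, j, hij⟩ : ∃ i j, h (τ ∆ bar true i j 1) = barSup h τ 1 := by
    obtain ⟨d, i, j, hsup⟩ := exists_eq_barSup h τ 1
    cases d with
    | true => exact ⟨i, j, hsup⟩
    | false => exact ⟨j, i, hsup⟩
  rw [← hij]
  linarith [hh.five_mul_bar_one_le hβ hL hτ i j, le_barSup h τ true (i - 1) j 2,
    le_barSup h τ true i j 2, le_barSup h τ false (j - 1) i 2, le_barSup h τ false j i 2]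

theorem two_mul_barSup_le (hh : IsBoundedHarmonic β h) (hβ : 0 ≤ β) (hτ : τ ∈ GroundP L)
    (hk : 0 < k) (hkL : k + 3 ≤ L) :
    2 * barSup h τ (k + 1) ≤ barSup h τ k + barSup h τ (k + 2) + slow L β := by
  obtain ⟨d, i, j, hsup⟩ := exists_eq_barSup h τ (k + 1)
  rw [← hsup]
  linarith [hh.four_mul_bar_le hβ hτ d i j hk hkL, le_barSup h τ d (i + 1) j k,
    le_barSup h τ d i j k, le_barSup h τ d (i - 1) j (k + 2), le_barSup h τ d i j (k + 2)]

-- The length of a bar performs a nearly symmetric random walk, killed at rate one fifth at length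
-- one, so it reaches `L - 1` before `0` with probability of order `4 / (L + 2)`.
theorem apply_flipP_le (hh : IsBoundedHarmonic β h) (hβ : 0 ≤ β) (hL : 3 ≤ L)
    (hτ : τ ∈ GroundP L) (hτ₀ : h τ ≤ 0) {S : ℝ}
    (hS : ∀ d j x, h (flipP L (τ ∆ line d j) x) ≤ S) (x : Fin L × Fin L) :
    h (flipP L τ x) ≤ 4 * S / (L + 2) + 2 * L * slow L β := by
  have hslow : 0 ≤ slow L β := by unfold slow; positivity
  have hL' : (3 : ℝ) ≤ L := by exact_mod_cast hL
  have hend : barSup h τ (L - 1) ≤ S := by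
    obtain ⟨d, i, j, hsup⟩ := exists_eq_barSup h τ (L - 1)
    obtain ⟨y, hy⟩ := exists_symmDiff_bar_eq_flipP_line τ d i j
    rw [← hsup, hy]
    exact hS d j y
  have hwalk := sub_le_of_almost_convex (a := fun k ↦ barSup h τ (k + 1)) (ε := slow L β)
    (n := L - 3) (by linarith [hh.five_mul_barSup_one_le hβ hL hτ])
    (fun k hk ↦ hh.two_mul_barSup_le hβ hτ k.succ_pos (by omega)) (m := L - 2) (by omega)
  rw [show L - 2 + 1 = L - 1 by omega, Nat.cast_sub (by omega)] at hwalk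
  push_cast at hwalk
  calc h (flipP L τ x) ≤ barSup h τ 1 :=
        flipP_eq_symmDiff_bar τ x.1 x.2 ▸ le_barSup h τ true x.1 x.2 1
    _ ≤ 4 * S / (L + 2) + 2 * L * slow L β := by
      rw [div_add' _ _ _ (by positivity), le_div_iff₀ (by positivity)]
      nlinarith

end IsBoundedHarmonic

/-! ### Translations -/

/-- The translation of configurations by `-t` in the second coordinate. -/
def shift (t : Fin L) : Equiv.Perm (ConfigP L) :=
  ((Equiv.refl _).prodCongr (Equiv.subRight t)).arrowCongr (Equiv.refl Bool)

theorem shift_apply (t : Fin L) (σ : ConfigP L) (z : Fin L × Fin L) :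
    shift t σ z = σ (z.1, z.2 + t) := rfl

theorem shift_symmDiff (t : Fin L) (σ A : ConfigP L) : shift t (σ ∆ A) = shift t σ ∆ shift t A :=
  rfl

theorem isSymmetry_shift (t : Fin L) :
    IsSymmetry (shift t) ((Equiv.refl _).prodCongr (Equiv.subRight t)) :=
  isSymmetry_arrowCongr fun σ ⟨y₁, y₂⟩ ↦ by
    simp [defect, fsucc_eq_add_one, sub_add_eq_add_sub]

theorem line_true_apply (j : Fin L) (z : Fin L × Fin L) : line true j z = decide (z.2 = j) := by
  simp [line, rect, arc_one]

theorem line_false_apply (j : Fin L) (z : Fin L × Fin L) : line false j z = decide (z.1 = j) := by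
  simp [line, rect, arc_one]

theorem shift_line_true (t j : Fin L) : shift t (line true j) = line true (j - t) := by
  funext z
  simp only [shift_apply, line_true_apply, eq_sub_iff_add_eq]

theorem shift_line_false (t j : Fin L) : shift t (line false j) = line false j := by
  funext z
  simp only [shift_apply, line_false_apply]

theorem traceRate_shift (β : ℝ) (t : Fin L) (A : ConfigP L) :
    traceRate β (shift t A) = traceRate β A :=
  (isSymmetry_shift t).genP_mulVec_hitProb β A ⊥

theorem traceRate_line (β : ℝ) (d : Bool) (j : Fin L) :
    traceRate β (line d j) = traceRate β (line true (0 : Fin L)) := by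
  have hrow : traceRate β (line true j) = traceRate β (line true (0 : Fin L)) := by
    simpa only [shift_line_true, sub_self] using (traceRate_shift β j (line true j)).symm
  cases d with
  | true => exact hrow
  | false => rw [← hrow, ← traceRate_reflect, reflect_line, Bool.not_false]

/-! ### Hitting probabilities below the critical length -/

/-- `LineSeparated O n τ` means that `n` lines or more are needed to get from `τ` into `O`. -/
def LineSeparated (O : Finset (ConfigP L)) : ℕ → ConfigP L → Prop
  | 0, _ => True
  | n + 1, τ => τ ∉ O ∧ ∀ d j, LineSeparated O n (τ ∆ line d j)

namespace IsBoundedHarmonic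

variable {h : ConfigP L → ℝ} {O : Finset (ConfigP L)}

theorem apply_flipP_le_of_lineSeparated (hh : IsBoundedHarmonic β h) (hL : Subcritical L β)
    (hO : ∀ τ ∈ GroundP L, τ ∉ O → h τ ≤ 0) {n : ℕ} (hn : n ≤ 3) {τ : ConfigP L}
    (hτ : τ ∈ GroundP L) (hsep : LineSeparated O n τ) (x : Fin L × Fin L) :
    h (flipP L τ x) ≤ (38 / L) ^ n := by
  induction n generalizing τ x with
  | zero => exact (le_abs_self _).trans ((hh.abs_le_one _).trans_eq (pow_zero _).symm)
  | succ n ih =>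
    have hpos : (0 : ℝ) < L := by linarith [hL.twenty_le_cast]
    have hnear := hh.apply_flipP_le hL.nonneg (by linarith [hL.twenty_le]) hτ (hO τ hτ hsep.1)
      fun d j y ↦ ih (by omega)
        ((symmDiff_mem_groundP_iff hτ).2 (line_mem_groundP d j)) (hsep.2 d j) y
    have hpow : 1 / (L : ℝ) ^ 2 ≤ (38 / L) ^ n := calc
      1 / (L : ℝ) ^ 2 = (1 / L) ^ 2 := (one_div_pow _ _).symm
      _ ≤ (1 / L) ^ n := pow_le_pow_of_le_one (by positivity)
        ((div_le_one hpos).2 (by linarith [hL.twenty_le_cast])) (by omega)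
      _ ≤ (38 / L) ^ n := by gcongr; norm_num
    calc h (flipP L τ x) ≤ 4 * (38 / L) ^ n / (L + 2) + 2 * L * slow L β := hnear x
      _ ≤ 4 * (38 / L) ^ n / L + 34 / (L : ℝ) ^ 3 := by
        gcongr
        · linarith
        · exact hL.two_mul_mul_slow_le
      _ = 4 * (38 / L) ^ n / L + 34 * (1 / (L : ℝ) ^ 2) / L := by field_simp
      _ ≤ 4 * (38 / L) ^ n / L + 34 * (38 / L) ^ n / L := by gcongr
      _ = (38 / L) ^ (n + 1) := by ring

theorem one_sixth_le_apply_flipP (hh : IsBoundedHarmonic β h) (hL : Subcritical L β)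
    (hnonneg : ∀ σ, 0 ≤ h σ) {τ : ConfigP L} (hτ : τ ∈ GroundP L) (hτ₁ : h τ = 1)
    (x : Fin L × Fin L) : 1 / 6 ≤ h (flipP L τ x) := by
  have hslow : slow L β ≤ 1 / 12 := hL.slow_le.trans <| by
    have hpos : (0 : ℝ) < L := by linarith [hL.twenty_le_cast]
    rw [div_le_div_iff₀ (by positivity) (by norm_num)]
    linarith [pow_le_pow_left₀ (by norm_num) hL.twenty_le_cast 4]
  have hstep := hh.neg.five_mul_bar_one_le hL.nonneg (by linarith [hL.twenty_le]) hτ x.1 x.2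
  rw [← flipP_eq_symmDiff_bar] at hstep
  simp only [Pi.neg_apply, hτ₁] at hstep
  linarith [hnonneg (τ ∆ bar true (x.1 - 1) x.2 2), hnonneg (τ ∆ bar true x.1 x.2 2),
    hnonneg (τ ∆ bar false (x.2 - 1) x.1 2), hnonneg (τ ∆ bar false x.2 x.1 2)]

theorem le_apply_flipP_bot (hh : IsBoundedHarmonic β h) (hL : Subcritical L β)
    (hnonneg : ∀ σ, 0 ≤ h σ) (hline : ∀ d j, h (line d j) = 1) (x : Fin L × Fin L) :
    1 / (2 * L) ≤ h (flipP L ⊥ x) := by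
  have hpos := hL.twenty_le_cast
  have hnear := hh.neg.apply_flipP_le hL.nonneg (by linarith [hL.twenty_le]) bot_mem_groundP
    (by simpa using hnonneg ⊥) (S := -(1 / 6)) (fun d j y ↦ by
      rw [bot_symmDiff, Pi.neg_apply, neg_le_neg_iff]
      exact hh.one_sixth_le_apply_flipP hL hnonneg (line_mem_groundP d j) (hline d j) y) x
  have hmain : 1 / (2 * (L : ℝ)) + 34 / (L : ℝ) ^ 3 ≤ 4 * (1 / 6) / (L + 2) := by
    rw [div_add_div _ _ (by positivity) (by positivity),
      div_le_div_iff₀ (by positivity) (by positivity)]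
    have hsq : 400 ≤ (L : ℝ) ^ 2 := by nlinarith
    have hcubic : 204 * ((L : ℝ) + 2) ≤ L ^ 2 * (L - 6) := by nlinarith
    nlinarith [mul_le_mul_of_nonneg_left hcubic (show 0 ≤ (L : ℝ) by positivity)]
  have hslow := hL.two_mul_mul_slow_le
  rw [mul_neg, neg_div, Pi.neg_apply] at hnear
  linarith

end IsBoundedHarmonic

/-! ### Bounds on the rates of the trace chain -/

section Rates

variable {O : Finset (ConfigP L)} {A : ConfigP L} {n : ℕ}

theorem sum_traceRate (hL : 2 ≤ L) (hβ : 0 ≤ β) (O : Finset (ConfigP L)) :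
    ∑ A ∈ O, traceRate β A = Real.exp (-4 * β) * ∑ x,
      ((∑ A ∈ O, hitProb β A) (flipP L ⊥ x) - (∑ A ∈ O, hitProb β A) ⊥) := by
  rw [← genP_mulVec_of_mem_groundP hL hβ bot_mem_groundP, Matrix.mulVec_sum, Finset.sum_apply]
  rfl

theorem sum_traceRate_le (hL : Subcritical L β) (hn : n ≤ 3) (hsep : LineSeparated O n ⊥) :
    ∑ A ∈ O, traceRate β A ≤ Real.exp (-4 * β) * (L ^ 2 * (38 / L) ^ n) := by
  rw [sum_traceRate (by linarith [hL.twenty_le]) hL.nonneg]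
  gcongr
  calc _ ≤ ∑ _x : Fin L × Fin L, (38 / L : ℝ) ^ n := by
        refine Finset.sum_le_sum fun x _ ↦ (sub_le_self _ (sum_hitProb_nonneg β O ⊥)).trans ?_
        refine (isBoundedHarmonic_sum_hitProb β O).apply_flipP_le_of_lineSeparated hL
          (fun τ hτ hτO ↦ ?_) hn bot_mem_groundP hsep x
        rw [sum_hitProb_of_mem_groundP O hτ, if_neg hτO]
    _ = L ^ 2 * (38 / L) ^ n := by simp [pow_two]

theorem card_mul_traceRate_le (hL : Subcritical L β) (hn : n ≤ 3)
    (hsep : LineSeparated O n ⊥) (hA : ∀ B ∈ O, traceRate β B = traceRate β A) :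
    O.card * traceRate β A ≤ Real.exp (-4 * β) * (L ^ 2 * (38 / L) ^ n) := by
  rw [← nsmul_eq_mul, ← Finset.sum_const, ← Finset.sum_congr rfl hA]
  exact sum_traceRate_le hL hn hsep

theorem traceRate_nonneg (hL : Subcritical L β) (hA : A ≠ ⊥) : 0 ≤ traceRate β A := by
  have hsum := sum_traceRate (by linarith [hL.twenty_le]) hL.nonneg {A}
  rw [Finset.sum_singleton, sum_hitProb_of_mem_groundP _ bot_mem_groundP,
    if_neg (by simpa using hA.symm)] at hsum
  rw [hsum]
  exact mul_nonneg (Real.exp_pos _).le (Finset.sum_nonneg fun x _ ↦ by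
    simpa using sum_hitProb_nonneg β {A} (flipP L ⊥ x))

theorem traceRate_of_mem_lines (hA : A ∈ lines L) :
    traceRate β A = traceRate β (line true (0 : Fin L)) := by
  obtain ⟨d, j, rfl⟩ := mem_lines.1 hA
  exact traceRate_line β d j

theorem bot_notMem_lines : ⊥ ∉ lines L := fun hmem ↦ by
  obtain ⟨d, j, hj⟩ := mem_lines.1 hmem
  cases d <;> simpa [line_true_apply, line_false_apply] using congrFun hj (j, j)

theorem line_injective (hL : 2 ≤ L) :
    Function.Injective fun p : Bool × Fin L ↦ line p.1 p.2 := by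
  have hcross : ∀ i j : Fin L, line true i ≠ line false j := fun i j hij ↦ by
    have hvalue := congrFun hij (j + ((1 : ℕ) : Fin L), i)
    rw [line_true_apply, line_false_apply, decide_eq_true rfl, eq_comm, decide_eq_true_iff,
      add_eq_left] at hvalue
    exact natCast_ne_zero one_pos hL hvalue
  rintro ⟨d, i⟩ ⟨d', j⟩ hij
  cases d <;> cases d'
  · simpa [line_false_apply] using congrFun hij (i, i)
  · exact (hcross _ _ hij.symm).elim
  · exact (hcross _ _ hij).elim
  · simpa [line_true_apply] using congrFun hij (i, i)

theorem card_lines (hL : 2 ≤ L) : (lines L).card = 2 * L := by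
  rw [lines, Finset.card_image_of_injective _ (line_injective hL)]
  simp

theorem traceRate_line_le (hL : Subcritical L β) :
    traceRate β (line true (0 : Fin L)) ≤ 19 * Real.exp (-4 * β) := by
  have hcard := card_mul_traceRate_le (O := lines L) (n := 1) hL (by norm_num)
    ⟨bot_notMem_lines, fun _ _ ↦ trivial⟩ fun _ ↦ traceRate_of_mem_lines
  rw [card_lines (by linarith [hL.twenty_le])] at hcard
  have hpos : (0 : ℝ) < L := by linarith [hL.twenty_le_cast]
  push_cast at hcard
  field_simp at hcard
  rw [neg_mul]
  linarith

theorem le_traceRate_line (hL : Subcritical L β) :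
    Real.exp (-4 * β) / 4 ≤ traceRate β (line true (0 : Fin L)) := by
  have hpos : (0 : ℝ) < L := by linarith [hL.twenty_le_cast]
  have hflip : ∀ x, 1 / (2 * L : ℝ) ≤ (∑ A ∈ lines L, hitProb β A) (flipP L ⊥ x) :=
    (isBoundedHarmonic_sum_hitProb β _).le_apply_flipP_bot hL (sum_hitProb_nonneg β _)
      fun d j ↦ by
        rw [sum_hitProb_of_mem_groundP _ (line_mem_groundP d j), if_pos (mem_lines.2 ⟨d, j, rfl⟩)]
  have hsum : Real.exp (-4 * β) * (L / 2) ≤ 2 * L * traceRate β (line true (0 : Fin L)) := calc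
    Real.exp (-4 * β) * (L / 2) = Real.exp (-4 * β) * ∑ _x : Fin L × Fin L, 1 / (2 * L : ℝ) := by
      simp
      field_simp
    _ ≤ ∑ A ∈ lines L, traceRate β A := by
      rw [sum_traceRate (by linarith [hL.twenty_le]) hL.nonneg]
      gcongr with x
      rw [sum_hitProb_of_mem_groundP _ bot_mem_groundP, if_neg bot_notMem_lines, sub_zero]
      exact hflip x
    _ = 2 * L * traceRate β (line true (0 : Fin L)) := by
      rw [Finset.sum_congr rfl fun _ ↦ traceRate_of_mem_lines, Finset.sum_const,
        card_lines (by linarith [hL.twenty_le]), nsmul_eq_mul]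
      push_cast
      ring
  nlinarith

theorem mem_lines_of_shift_mem {t : Fin L} (hA : shift t A ∈ lines L) : A ∈ lines L := by
  obtain ⟨d, j, hj⟩ := mem_lines.1 hA
  cases d with
  | true =>
    refine mem_lines.2 ⟨true, j + t, (shift t).injective ?_⟩
    rw [shift_line_true, add_sub_cancel_right, hj]
  | false =>
    refine mem_lines.2 ⟨false, j, (shift t).injective ?_⟩
    rw [shift_line_false, hj]

theorem eq_or_eq_add_of_shift_eq {d : Bool} {i j s t : Fin L} (hij : line true i ≠ line d j)
    (hshift : shift t (line true i ∆ line d j) = shift s (line true i ∆ line d j)) :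
    t = s ∨ t = s + (i - j) := by
  have hvalue := congrFun hshift (0, i - t)
  cases d with
  | true =>
    have hne : i ≠ j := fun h ↦ hij (h ▸ rfl)
    simp only [shift_symmDiff, shift_line_true, Pi.symmDiff_apply, line_true_apply,
      Bool.symmDiff_eq_xor, sub_left_inj, hne, decide_true, decide_false, Bool.xor_false] at hvalue
    by_cases hs : i - t = i - s
    · exact Or.inl (sub_right_injective hs)
    · have ht : i - t = j - s := by simpa [hs] using hvalue
      exact Or.inr (by linear_combination -ht)
  | false =>
    simp only [shift_symmDiff, shift_line_false, shift_line_true, Pi.symmDiff_apply,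
      line_true_apply, line_false_apply, Bool.symmDiff_eq_xor, Bool.xor_left_inj] at hvalue
    exact Or.inl (by simpa using hvalue)

theorem le_two_mul_card_image_shift {d : Bool} {i j : Fin L} (hij : line true i ≠ line d j) :
    L ≤ 2 * (Finset.univ.image fun t ↦ shift t (line true i ∆ line d j)).card := by
  refine (Finset.card_fin L).symm.le.trans (Finset.card_le_mul_card_image _ _ fun B hB ↦ ?_)
  obtain ⟨s, -, rfl⟩ := Finset.mem_image.1 hB
  exact (Finset.card_le_card fun t ht ↦ by
    simpa using eq_or_eq_add_of_shift_eq hij (Finset.mem_filter.1 ht).2).trans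
      (Finset.card_le_two (a := s) (b := s + (i - j)))

theorem traceRate_le_of_line_symmDiff_line (hL : Subcritical L β) {d d' : Bool} {i j : Fin L}
    (hbot : line d i ∆ line d' j ≠ ⊥) (hline : line d i ∆ line d' j ∉ lines L) :
    traceRate β (line d i ∆ line d' j) ≤ 38 ^ 3 * Real.exp (-4 * β) / L := by
  wlog hd : d = true generalizing d d'
  · have hreflect : line (!d) i ∆ line (!d') j = reflect (line d i ∆ line d' j) := by
      rw [reflect_symmDiff, reflect_line, reflect_line]
    rw [← traceRate_reflect, ← hreflect]
    exact this (fun h ↦ hbot (reflect.injective (hreflect ▸ h)))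
      (fun h ↦ hline (mem_lines_of_reflect_mem (hreflect ▸ h))) (by simpa using hd)
  subst hd
  set A := line true i ∆ line d' j
  set O := Finset.univ.image fun t ↦ shift t A
  have hO : ∀ B ∈ O, ∃ t, shift t A = B := by simp [O]
  have hsep : LineSeparated O 2 ⊥ := by
    refine ⟨fun hmem ↦ ?_, fun e k ↦ ⟨fun hmem ↦ ?_, fun _ _ ↦ trivial⟩⟩
    · obtain ⟨t, ht⟩ := hO _ hmem
      exact hbot ((shift t).injective ht)
    · obtain ⟨t, ht⟩ := hO _ hmem
      rw [bot_symmDiff] at ht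
      exact hline (mem_lines_of_shift_mem (t := t) (mem_lines.2 ⟨e, k, ht.symm⟩))
  have hrate := card_mul_traceRate_le hL (by norm_num) hsep fun B hB ↦ by
    obtain ⟨t, rfl⟩ := hO B hB
    exact traceRate_shift β t A
  have hcard : (L : ℝ) ≤ 2 * O.card := by
    exact_mod_cast le_two_mul_card_image_shift (mt symmDiff_eq_bot.2 hbot)
  have hpos : (0 : ℝ) < L := by linarith [hL.twenty_le_cast]
  rw [le_div_iff₀ hpos]
  calc traceRate β A * L ≤ traceRate β A * (2 * O.card) := by
        gcongr
        exact traceRate_nonneg hL hbot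
    _ = 2 * (O.card * traceRate β A) := by ring
    _ ≤ 2 * (Real.exp (-4 * β) * (L ^ 2 * (38 / L) ^ 2)) := by gcongr
    _ = 2 * 38 ^ 2 * Real.exp (-4 * β) := by field_simp
    _ ≤ 38 ^ 3 * Real.exp (-4 * β) := by gcongr; norm_num

theorem traceRate_le_of_notMem_lines (hL : Subcritical L β) (hbot : A ≠ ⊥) (hline : A ∉ lines L) :
    traceRate β A ≤ 38 ^ 3 * Real.exp (-4 * β) / L := by
  by_cases hpair : ∃ d i d' j, line d i ∆ line d' j = A
  · obtain ⟨d, i, d', j, rfl⟩ := hpair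
    exact traceRate_le_of_line_symmDiff_line hL hbot hline
  have hsep : LineSeparated {A} 3 ⊥ := by
    simp only [LineSeparated, Finset.mem_singleton, bot_symmDiff, implies_true, and_true]
    exact ⟨hbot.symm, fun d i ↦ ⟨fun h ↦ hline (mem_lines.2 ⟨d, i, h⟩),
      fun d' j h ↦ hpair ⟨d, i, d', j, h⟩⟩⟩
  have hrate := card_mul_traceRate_le hL le_rfl hsep fun B hB ↦ by rw [Finset.mem_singleton.1 hB]
  have hpos : (0 : ℝ) < L := by linarith [hL.twenty_le_cast]
  calc traceRate β A ≤ Real.exp (-4 * β) * (L ^ 2 * (38 / L) ^ 3) := by simpa using hrate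
    _ = 38 ^ 3 * Real.exp (-4 * β) / L := by field_simp

end Rates

/-! ### Lines and the hypercube -/

section Hypercube

variable {u v : Fin (2 * L - 1) → Bool}

theorem update_not_apply {N : ℕ} (u : Fin N → Bool) (k i : Fin N) :
    Function.update u k (!u k) i = (u i ^^ decide (i = k)) := by
  obtain rfl | hi := eq_or_ne i k
  · simp
  · simp [hi]

theorem hamDist_eq_one_iff {N : ℕ} {u v : Fin N → Bool} :
    hamDist u v = 1 ↔ ∃ k, v = Function.update u k (!u k) := by
  simp only [hamDist, Finset.card_eq_one, Finset.ext_iff, funext_iff, update_not_apply,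
    Finset.mem_filter, Finset.mem_univ, true_and, Finset.mem_singleton]
  refine exists_congr fun k ↦ forall_congr' fun i ↦ ?_
  by_cases hi : i = k <;> simp [hi, Bool.eq_not, eq_comm]

theorem wInv_injective : Function.Injective (wInv L) := by
  intro u v huv
  have hcol : ∀ i : Fin (2 * L - 1), i.val < L → u i = v i := fun i hi ↦ by
    simpa [wInv] using congrFun huv (⟨i, hi⟩, ⟨L - 1, by omega⟩)
  funext i
  by_cases hi : i.val < L
  · exact hcol i hi
  · have hrow := congrFun huv (⟨0, Nat.pos_of_neZero L⟩, ⟨i - L, by omega⟩)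
    have hlast : i.val - L ≠ L - 1 := by omega
    have hcorner := hcol ⟨0, by omega⟩ (Nat.pos_of_neZero L)
    simp only [wInv, hlast, dite_false, hcorner, Nat.add_sub_cancel' (not_lt.1 hi), Fin.eta] at hrow
    cases hu : u i <;> cases hv : v i <;> simp_all

theorem wInv_update_of_lt {k : Fin (2 * L - 1)} (hk : k.val < L) :
    wInv L (Function.update u k (!u k)) = wInv L u ∆ line false ⟨k, hk⟩ := by
  funext z
  have hrow : L + z.2.val ≠ k := by omega
  simp only [wInv, update_not_apply, Pi.symmDiff_apply, Bool.symmDiff_eq_xor, line_false_apply,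
    Fin.ext_iff, hrow, decide_false, Bool.xor_false]
  split_ifs
  · rfl
  · exact (by decide : ∀ a b c : Bool, ((a ^^ c) == b) = ((a == b) ^^ c)) _ _ _

theorem wInv_update_of_le {k : Fin (2 * L - 1)} (hk : L ≤ k.val) :
    wInv L (Function.update u k (!u k)) = wInv L u ∆ line true ⟨k - L, by omega⟩ := by
  funext z
  have hcol : z.1.val ≠ k := by omega
  have hrow : z.2.val = k - L ↔ L + z.2.val = k := by omega
  simp only [wInv, update_not_apply, Pi.symmDiff_apply, Bool.symmDiff_eq_xor, line_true_apply,
    Fin.ext_iff, hcol, hrow, decide_false, Bool.xor_false]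
  split_ifs with hlast
  · have hne : L + z.2.val ≠ k := by omega
    simp [hne]
  · exact (by decide : ∀ a b c : Bool, (a == (b ^^ c)) = ((a == b) ^^ c)) _ _ _

theorem wInv_negv : wInv L (negv u) =
    wInv L u ∆ line true ⟨L - 1, Nat.sub_one_lt (NeZero.ne L)⟩ := by
  funext z
  simp only [wInv, negv, Pi.symmDiff_apply, Bool.symmDiff_eq_xor, line_true_apply, Fin.ext_iff]
  split_ifs with hlast <;> simp [hlast]

theorem wInv_symmDiff_wInv_mem_lines_iff :
    wInv L u ∆ wInv L v ∈ lines L ↔ hamDist u v = 1 ∨ v = negv u := by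
  refine ⟨fun h ↦ ?_, ?_⟩
  · obtain ⟨d, j, hj⟩ := mem_lines.1 h
    have hv : wInv L v = wInv L u ∆ line d j := by rw [hj, symmDiff_symmDiff_cancel_left]
    have hjL := j.isLt
    cases d with
    | false =>
      refine Or.inl (hamDist_eq_one_iff.2 ⟨⟨j, by omega⟩, wInv_injective ?_⟩)
      rw [wInv_update_of_lt hjL, hv]
    | true =>
      by_cases hlast : j.val = L - 1
      · refine Or.inr (wInv_injective ?_)
        simp only [wInv_negv, hv, ← hlast, Fin.eta]
      · refine Or.inl (hamDist_eq_one_iff.2 ⟨⟨L + j, by omega⟩, wInv_injective ?_⟩)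
        rw [wInv_update_of_le (Nat.le_add_right L j), hv]
        simp
  · rintro (h | rfl)
    · obtain ⟨k, rfl⟩ := hamDist_eq_one_iff.1 h
      obtain hk | hk := lt_or_ge k.val L
      · rw [wInv_update_of_lt hk, symmDiff_symmDiff_cancel_left]
        exact mem_lines.2 ⟨_, _, rfl⟩
      · rw [wInv_update_of_le hk, symmDiff_symmDiff_cancel_left]
        exact mem_lines.2 ⟨_, _, rfl⟩
    · rw [wInv_negv, symmDiff_symmDiff_cancel_left]
      exact mem_lines.2 ⟨_, _, rfl⟩

end Hypercube

theorem abs_traceGen_sub_Qhyp_le (hL : Subcritical L β) {u v : Fin (2 * L - 1) → Bool}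
    (huv : u ≠ v) (hu : wInv L u ∈ GroundP L) (hv : wInv L v ∈ GroundP L) :
    |traceGen L β ⟨wInv L u, hu⟩ ⟨wInv L v, hv⟩ -
        Qhyp L (traceRate β (line true (0 : Fin L))) 0 u v| ≤
      38 ^ 3 * Real.exp (-4 * β) / L := by
  have hbot : wInv L u ∆ wInv L v ≠ ⊥ := mt symmDiff_eq_bot.1 (wInv_injective.ne huv)
  rw [traceGen_apply, Qhyp, if_neg huv, ite_self]
  by_cases hline : wInv L u ∆ wInv L v ∈ lines L
  · rw [if_pos (wInv_symmDiff_wInv_mem_lines_iff.1 hline), traceRate_of_mem_lines hline, sub_self,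
      abs_zero]
    positivity
  · rw [if_neg (mt wInv_symmDiff_wInv_mem_lines_iff.2 hline), sub_zero,
      abs_of_nonneg (traceRate_nonneg hL hbot)]
    exact traceRate_le_of_notMem_lines hL hbot hline

end Torus

/-! ### The critical length -/

theorem subcritical_Lc (hβ : 40 ≤ β) : Subcritical (Lc β) β where
  twenty_le := Nat.le_floor (by push_cast; linarith [Real.add_one_le_exp (β / 2)])
  le_exp := Nat.floor_le (Real.exp_pos _).le

theorem exp_neg_four_mul (β : ℝ) : Real.exp (-4 * β) = 1 / Real.exp (β / 2) ^ 8 := by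
  rw [← Real.exp_nat_mul, one_div, ← Real.exp_neg]
  congr 1
  push_cast
  ring

theorem Subcritical.exp_neg_four_mul_le (hL : Subcritical L β) :
    Real.exp (-4 * β) ≤ 1 / (L : ℝ) ^ 8 := by
  have hpos : (0 : ℝ) < L := by linarith [hL.twenty_le_cast]
  rw [exp_neg_four_mul]
  gcongr
  exact hL.le_exp

theorem le_exp_neg_four_mul_Lc (hL : Subcritical (Lc β) β) :
    1 / (256 * (Lc β : ℝ) ^ 8) ≤ Real.exp (-4 * β) := by
  rw [exp_neg_four_mul, show 256 * (Lc β : ℝ) ^ 8 = (2 * Lc β) ^ 8 by ring]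
  gcongr
  linarith [Nat.lt_floor_add_one (Real.exp (β / 2)), hL.twenty_le_cast,
    show (Lc β : ℝ) = ⌊Real.exp (β / 2)⌋₊ from rfl]

end SPMP

theorem trace_hypercube_comparison_general {L : ℕ} {β : ℝ} (hL : Subcritical L β) :
    ∃ a : ℝ, Real.exp (-4 * β) / 4 ≤ a ∧ a ≤ 19 * Real.exp (-4 * β) ∧
      ∀ u v : Fin (2 * L - 1) → Bool, u ≠ v →
        ∀ (hu : wInv L u ∈ GroundP L) (hv : wInv L v ∈ GroundP L),
          |traceGen L β ⟨wInv L u, hu⟩ ⟨wInv L v, hv⟩ - Qhyp L a 0 u v| ≤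
            38 ^ 3 * Real.exp (-4 * β) / L := by
  have hL₀ : NeZero L := ⟨by linarith [hL.twenty_le]⟩
  exact ⟨traceRate β (line true 0), le_traceRate_line hL, traceRate_line_le hL,
    fun _ _ ↦ abs_traceGen_sub_Qhyp_le hL⟩

/-- Corollary `LemmaHyperComp`, hypercube comparison for the trace chain:
there are `a_L ≍ L⁻⁸` and `0 ≤ a_L' ≲ L⁻⁹` such that the trace generator `Q_𝒢`, transported
to the hypercube via `w`, agrees with `Q_hyp` up to an error `O(L⁻⁹)` in each off-diagonal
entry. -/
theorem trace_hypercube_comparison :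
    ∃ c₁ c₂ C C' β₀ : ℝ, 0 < c₁ ∧ 0 < c₂ ∧ 0 < C ∧ 0 < C' ∧
      ∀ β : ℝ, β₀ ≤ β → ∃ a a' : ℝ,
        c₁ / (Lc β : ℝ) ^ 8 ≤ a ∧ a ≤ c₂ / (Lc β : ℝ) ^ 8 ∧
        0 ≤ a' ∧ a' ≤ C / (Lc β : ℝ) ^ 9 ∧
        ∀ u v : Fin (2 * Lc β - 1) → Bool, u ≠ v →
          ∀ (hu : wInv (Lc β) u ∈ GroundP (Lc β)) (hv : wInv (Lc β) v ∈ GroundP (Lc β)),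
            |traceGen (Lc β) β ⟨wInv (Lc β) u, hu⟩ ⟨wInv (Lc β) v, hv⟩ -
                Qhyp (Lc β) a a' u v| ≤ C' / (Lc β : ℝ) ^ 9 := by
  refine ⟨1 / 1024, 19, 1, 38 ^ 3, 40, by norm_num, by norm_num, by norm_num, by norm_num,
    fun β hβ ↦ ?_⟩
  have hL := subcritical_Lc hβ
  obtain ⟨a, hlower, hupper, herror⟩ := trace_hypercube_comparison_general hL
  refine ⟨a, 0, le_trans ?_ hlower, hupper.trans ?_, le_rfl, by positivity,
    fun u v huv hu hv ↦ (herror u v huv hu hv).trans ?_⟩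
  · calc 1 / 1024 / (Lc β : ℝ) ^ 8 = 1 / (256 * (Lc β : ℝ) ^ 8) / 4 := by ring
      _ ≤ Real.exp (-4 * β) / 4 := by gcongr; exact le_exp_neg_four_mul_Lc hL
  · calc 19 * Real.exp (-4 * β) ≤ 19 * (1 / (Lc β : ℝ) ^ 8) := by
          gcongr; exact hL.exp_neg_four_mul_le
      _ = 19 / (Lc β : ℝ) ^ 8 := by ring
  · calc 38 ^ 3 * Real.exp (-4 * β) / Lc β ≤ 38 ^ 3 * (1 / (Lc β : ℝ) ^ 8) / Lc β := by
          gcongr; exact hL.exp_neg_four_mul_le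
      _ = 38 ^ 3 / (Lc β : ℝ) ^ 9 := by rw [mul_one_div, div_div, ← pow_succ]

end
end

section
/- Cutoff upper bound for the perturbed hypercube walk: let {a_L}, {a_L'} be sequences with c₁L^{-8}≤a_L≤c₂L^{-8} and 0≤a_L'≤CL^{-9}, and let Q_hyp be the rate matrix on {-1,+1}^{2L-1} with Q_hyp(u,v)=a_L if |u−v|=1 or u=−v, Q_hyp(u,v)=a_L' if |u−v|∈{2,2L−2}, and 0 for all other u≠v (diagonal making rows sum to zero). Then for every δ>0, with T_{δ,+}=((1+δ)/4)·a_L^{-1}·log L, one has lim_{L→∞} max_{u∈{-1,+1}^{2L-1}} ‖e^{T_{δ,+}Q_hyp}(u,·) − μ(·)‖_TV = 0, where μ is the uniform measure on {-1,+1}^{2L-1}. -/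
open scoped BigOperators

attribute [local instance] Classical.propDecidable

noncomputable section

namespace Hyp

/-- Hamming distance on the hypercube `{-1,+1}^N` (coded by `Bool`). -/
def hamDist {N : ℕ} (u v : Fin N → Bool) : ℕ :=
  (Finset.univ.filter fun i : Fin N => u i ≠ v i).card

/-- Coordinatewise negation on the hypercube. -/
def negv {N : ℕ} (u : Fin N → Bool) : Fin N → Bool := fun i => !(u i)

/-- The rate matrix `Q_hyp` on `{-1,+1}^{2L-1}`: rate `a` across Hamming distance `1` and to
the antipode, rate `a'` across Hamming distances `2` and `2L-2`, zero for all other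
off-diagonal pairs, diagonal making rows sum to zero. -/
def Qhyp (L : ℕ) (a a' : ℝ) :
    Matrix (Fin (2 * L - 1) → Bool) (Fin (2 * L - 1) → Bool) ℝ :=
  fun u v =>
    if u = v then
      -(∑ w ∈ Finset.univ.filter (fun w => w ≠ u),
        (if hamDist u w = 1 ∨ w = negv u then a
         else if hamDist u w = 2 ∨ hamDist u w = 2 * L - 2 then a' else 0))
    else
      if hamDist u v = 1 ∨ v = negv u then a
      else if hamDist u v = 2 ∨ hamDist u v = 2 * L - 2 then a' else 0

/-- Entrywise matrix exponential `∑ₖ Aᵏ/k!`. -/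
def mexp {n : Type*} [Fintype n] [DecidableEq n] (A : Matrix n n ℝ) : Matrix n n ℝ :=
  fun i j => ∑' k : ℕ, (A ^ k) i j / (Nat.factorial k : ℝ)

/-- Total-variation distance between two (probability) vectors. -/
def tv {n : Type*} [Fintype n] (μ ν : n → ℝ) : ℝ := (∑ s, |μ s - ν s|) / 2

end Hyp

open Hyp

/-!
The Walsh characters simultaneously diagonalise all translation-invariant walks on the hypercube
`(ℤ/2)^ι`. Reading off the transition probabilities at time `t` in this basis, Cauchy-Schwarz and
Parseval bound `4 ‖e^{tQ}(u,·) - μ‖²_TV` by `∑_{S ≠ ∅} e^{-2tλ_S}`. Only the single-coordinate flips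
are needed to control the eigenvalues: if each has rate at least `a`, then `λ_S ≥ 2a|S|`, every
other jump contributing a nonnegative amount. The sum is then at most
`(1 + e^{-4at})^{|ι|} - 1 ≤ exp (|ι| e^{-4at}) - 1`, which tends to `0` as soon as `|ι| e^{-4at}`
does.
-/

namespace Hyp

open Filter Topology Matrix symmDiff

lemma tv_nonneg {n : Type*} [Fintype n] (μ ν : n → ℝ) : 0 ≤ tv μ ν := by
  unfold tv
  positivity

lemma sum_symmDiff {α M : Type*} [Fintype α] [GeneralizedBooleanAlgebra α] [AddCommMonoid M]
    (u : α) (g : α → M) : ∑ z, g (u ∆ z) = ∑ v, g v :=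
  Equiv.sum_comp (symmDiff_right_involutive u).toPerm g

section Walsh

variable {ι : Type*}

/-- The sign in `{-1,+1}` coded by a Boolean, so that `xor` becomes multiplication. -/
def sgn (b : Bool) : ℝ := if b then -1 else 1

/-- The Walsh character of the hypercube indexed by a set `S` of coordinates. As `S` varies, these
are the characters of the group `ι → Bool`, whose addition is the symmetric difference `∆`. -/
def walsh (S : Finset ι) (u : ι → Bool) : ℝ := ∏ i ∈ S, sgn (u i)

lemma sgn_mul_self (b : Bool) : sgn b * sgn b = 1 := by
  cases b <;> simp [sgn]

lemma sgn_symmDiff (b c : Bool) : sgn (b ∆ c) = sgn b * sgn c := by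
  cases b <;> cases c <;> simp [sgn]

lemma walsh_empty : walsh (∅ : Finset ι) = 1 := rfl

lemma walsh_bot (S : Finset ι) : walsh S ⊥ = 1 := by
  simp [walsh, sgn]

lemma walsh_mul_self (S : Finset ι) (u : ι → Bool) : walsh S u * walsh S u = 1 := by
  simp only [walsh, ← Finset.prod_mul_distrib, sgn_mul_self, Finset.prod_const_one]

lemma walsh_le_one (S : Finset ι) (u : ι → Bool) : walsh S u ≤ 1 := by
  nlinarith [walsh_mul_self S u, sq_nonneg (walsh S u - 1)]

lemma walsh_symmDiff (S : Finset ι) (u z : ι → Bool) :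
    walsh S (u ∆ z) = walsh S u * walsh S z := by
  simp only [walsh, ← Finset.prod_mul_distrib, ← sgn_symmDiff, Pi.symmDiff_apply]

lemma sum_walsh_index [Fintype ι] (z : ι → Bool) :
    ∑ S, walsh S z = if z = ⊥ then (2 : ℝ) ^ Fintype.card ι else 0 := by
  have hprod : ∑ S, walsh S z = ∏ i, (1 + sgn (z i)) := by
    rw [Finset.prod_one_add, Finset.powerset_univ]
    rfl
  rw [hprod]
  split_ifs with hz
  · subst hz
    norm_num [sgn]
  · obtain ⟨i, hi⟩ := Function.ne_iff.mp hz
    have hzi : z i = true := by simpa using hi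
    exact Finset.prod_eq_zero (Finset.mem_univ i) (by simp [hzi, sgn])

lemma sum_walsh_mul_walsh [Fintype ι] (u v : ι → Bool) :
    ∑ S, walsh S u * walsh S v = if u = v then (2 : ℝ) ^ Fintype.card ι else 0 := by
  simp only [← walsh_symmDiff, sum_walsh_index, symmDiff_eq_bot]

variable [DecidableEq ι]

/-- The displacement that flips the coordinate `i` only. -/
def flipAt (i : ι) : ι → Bool := Function.update ⊥ i true

lemma walsh_flipAt {S : Finset ι} {i : ι} (hi : i ∈ S) : walsh S (flipAt i) = -1 := by
  rw [walsh, Finset.prod_eq_single_of_mem i hi fun j _ hj => by simp [flipAt, hj, sgn]]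
  simp [flipAt, sgn]

lemma flipAt_ne_bot (i : ι) : flipAt i ≠ ⊥ := fun h => by
  simpa [flipAt] using congrFun h i

lemma flipAt_injective : Function.Injective (flipAt : ι → ι → Bool) := fun i j h => by
  by_contra hij
  simpa [flipAt, hij] using congrFun h i

variable [Fintype ι]

lemma sum_walsh_eq_zero {S : Finset ι} (hS : S.Nonempty) : ∑ u, walsh S u = 0 := by
  obtain ⟨i, hi⟩ := hS
  have h := sum_symmDiff (flipAt i) (walsh S)
  simp only [walsh_symmDiff, walsh_flipAt hi, ← Finset.mul_sum] at h
  linarith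

lemma sum_sq_dotProduct_walsh (f : (ι → Bool) → ℝ) :
    ∑ S, (f ⬝ᵥ walsh S) ^ 2 = 2 ^ Fintype.card ι * ∑ v, f v ^ 2 := by
  calc ∑ S, (f ⬝ᵥ walsh S) ^ 2
      = ∑ S, ∑ v, ∑ w, f v * f w * (walsh S v * walsh S w) := by
        refine Finset.sum_congr rfl fun S _ => ?_
        rw [sq, dotProduct, Finset.sum_mul_sum]
        exact Finset.sum_congr rfl fun v _ => Finset.sum_congr rfl fun w _ => by ring
    _ = ∑ v, ∑ w, f v * f w * ∑ S, walsh S v * walsh S w := by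
        simp only [Finset.mul_sum]
        rw [Finset.sum_comm]
        exact Finset.sum_congr rfl fun v _ => Finset.sum_comm
    _ = 2 ^ Fintype.card ι * ∑ v, f v ^ 2 := by
        simp only [sum_walsh_mul_walsh, mul_ite, mul_zero, Finset.sum_ite_eq, Finset.mem_univ,
          if_true, ← Finset.sum_mul, mul_comm, ← sq]

lemma tv_uniform_le_sqrt_sum_sq_dotProduct_walsh {f : (ι → Bool) → ℝ} (hf : ∑ v, f v = 1) :
    tv f (fun _ => 1 / 2 ^ Fintype.card ι) ≤
      √(∑ S ∈ Finset.univ.erase ∅, (f ⬝ᵥ walsh S) ^ 2) / 2 := by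
  set g : (ι → Bool) → ℝ := fun v => f v - 1 / 2 ^ Fintype.card ι with hg
  have hcoeff (S : Finset ι) :
      g ⬝ᵥ walsh S = f ⬝ᵥ walsh S - 1 / 2 ^ Fintype.card ι * ∑ v, walsh S v := by
    simp only [hg, dotProduct, sub_mul, Finset.sum_sub_distrib, Finset.mul_sum]
  have hempty : g ⬝ᵥ walsh ∅ = 0 := by
    rw [hcoeff, walsh_empty, dotProduct_one, hf]
    simp
  have hnonempty {S : Finset ι} (hS : S ≠ ∅) : g ⬝ᵥ walsh S = f ⬝ᵥ walsh S := by
    rw [hcoeff, sum_walsh_eq_zero (Finset.nonempty_iff_ne_empty.mpr hS), mul_zero, sub_zero]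
  unfold tv
  gcongr
  refine Real.le_sqrt_of_sq_le ?_
  calc (∑ v, |g v|) ^ 2
      ≤ 2 ^ Fintype.card ι * ∑ v, g v ^ 2 := by
        simpa using sq_sum_le_card_mul_sum_sq (s := Finset.univ) (f := fun v => |g v|)
    _ = ∑ S, (g ⬝ᵥ walsh S) ^ 2 := (sum_sq_dotProduct_walsh g).symm
    _ = ∑ S ∈ Finset.univ.erase ∅, (g ⬝ᵥ walsh S) ^ 2 := by
        rw [← Finset.add_sum_erase _ _ (Finset.mem_univ ∅), hempty, zero_pow two_ne_zero, zero_add]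
    _ = ∑ S ∈ Finset.univ.erase ∅, (f ⬝ᵥ walsh S) ^ 2 :=
        Finset.sum_congr rfl fun S hS => by rw [hnonempty (Finset.ne_of_mem_erase hS)]

end Walsh

section MatrixExponential

variable {n : Type*} [Fintype n] [DecidableEq n] {A : Matrix n n ℝ}

lemma summable_smul_pow (A : Matrix n n ℝ) :
    Summable fun k : ℕ => (k.factorial⁻¹ : ℝ) • A ^ k := by
  let := Matrix.linftyOpNormedRing (n := n) (α := ℝ)
  let := Matrix.linftyOpNormedAlgebra (n := n) (R := ℝ) (α := ℝ)
  exact NormedSpace.expSeries_summable' A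

lemma hasSum_mexp (A : Matrix n n ℝ) :
    HasSum (fun k : ℕ => (k.factorial⁻¹ : ℝ) • A ^ k) (mexp A) := by
  refine Pi.hasSum.mpr fun i => Pi.hasSum.mpr fun j => ?_
  have h := (Pi.summable.mp (Pi.summable.mp (summable_smul_pow A) i) j).hasSum
  simpa only [mexp, Matrix.smul_apply, smul_eq_mul, div_eq_inv_mul] using h

lemma pow_mulVec_of_mulVec_eq_smul {f : n → ℝ} {c : ℝ} (h : A *ᵥ f = c • f) (k : ℕ) :
    A ^ k *ᵥ f = c ^ k • f := by
  induction k with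
  | zero => simp
  | succ k ih => rw [pow_succ, ← mulVec_mulVec, h, mulVec_smul, ih, smul_smul, pow_succ']

lemma mexp_mulVec_of_mulVec_eq_smul {f : n → ℝ} {c : ℝ} (h : A *ᵥ f = c • f) :
    mexp A *ᵥ f = Real.exp c • f := by
  have hA : HasSum (fun k : ℕ => ((k.factorial⁻¹ : ℝ) • A ^ k) *ᵥ f) (mexp A *ᵥ f) :=
    (hasSum_mexp A).map (mulVec.addMonoidHomLeft f) (continuous_id.matrix_mulVec continuous_const)
  have hc : HasSum (fun k : ℕ => ((k.factorial⁻¹ : ℝ) * c ^ k) • f) (Real.exp c • f) := by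
    rw [Real.exp_eq_exp_ℝ]
    exact (NormedSpace.exp_series_hasSum_exp' (𝕂 := ℝ) c).smul_const f
  refine hA.unique (hc.congr_fun fun k => ?_)
  rw [smul_mulVec, pow_mulVec_of_mulVec_eq_smul h, smul_smul]

end MatrixExponential

section Walk

variable {ι : Type*} [Fintype ι] [DecidableEq ι] {Q : Matrix (ι → Bool) (ι → Bool) ℝ} {a t : ℝ}

/-- `Q` is the generator of a continuous-time random walk on the group `ι → Bool`: the jump rate
from `u` to `v` depends only on the displacement `u ∆ v`. -/
structure IsWalkGenerator (Q : Matrix (ι → Bool) (ι → Bool) ℝ) : Prop where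
  apply_of_ne : ∀ {u v}, u ≠ v → Q u v = Q ⊥ (u ∆ v)
  rate_nonneg : ∀ {z}, z ≠ ⊥ → 0 ≤ Q ⊥ z
  sum_row : ∀ u, ∑ v, Q u v = 0

/-- The eigenvalue of `-Q` at the Walsh character indexed by `S`, for a walk generator `Q`. -/
def decayRate (Q : Matrix (ι → Bool) (ι → Bool) ℝ) (S : Finset ι) : ℝ :=
  ∑ z, Q ⊥ z * (1 - walsh S z)

lemma decayRate_empty (Q : Matrix (ι → Bool) (ι → Bool) ℝ) : decayRate Q ∅ = 0 := by
  simp [decayRate, walsh_empty]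

namespace IsWalkGenerator

lemma mulVec_apply (hQ : IsWalkGenerator Q) (f : (ι → Bool) → ℝ) (u : ι → Bool) :
    (Q *ᵥ f) u = ∑ z, Q ⊥ z * (f (u ∆ z) - f u) := by
  calc (Q *ᵥ f) u
      = ∑ v, Q u v * (f v - f u) := by
        simp only [mul_sub, Finset.sum_sub_distrib, ← Finset.sum_mul, hQ.sum_row u, zero_mul,
          sub_zero]
        rfl
    _ = ∑ v, Q ⊥ (u ∆ v) * (f v - f u) := by
        refine Finset.sum_congr rfl fun v _ => ?_
        obtain rfl | huv := eq_or_ne u v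
        · simp only [sub_self, mul_zero]
        · rw [hQ.apply_of_ne huv]
    _ = ∑ z, Q ⊥ z * (f (u ∆ z) - f u) := by
        simp only [← sum_symmDiff u fun v => Q ⊥ (u ∆ v) * (f v - f u),
          symmDiff_symmDiff_cancel_left]

lemma mulVec_walsh (hQ : IsWalkGenerator Q) (S : Finset ι) :
    Q *ᵥ walsh S = -decayRate Q S • walsh S := by
  ext u
  rw [hQ.mulVec_apply, Pi.smul_apply, smul_eq_mul, decayRate, ← Finset.sum_neg_distrib,
    Finset.sum_mul]
  refine Finset.sum_congr rfl fun z _ => ?_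
  rw [walsh_symmDiff]
  ring

lemma mul_one_sub_walsh_nonneg (hQ : IsWalkGenerator Q) (S : Finset ι) (z : ι → Bool) :
    0 ≤ Q ⊥ z * (1 - walsh S z) := by
  obtain rfl | hz := eq_or_ne z ⊥
  · simp only [walsh_bot, sub_self, mul_zero, le_refl]
  · exact mul_nonneg (hQ.rate_nonneg hz) (sub_nonneg.mpr (walsh_le_one S z))

lemma le_decayRate (hQ : IsWalkGenerator Q) (ha : ∀ i, a ≤ Q ⊥ (flipAt i)) (S : Finset ι) :
    2 * a * S.card ≤ decayRate Q S := by
  calc 2 * a * S.card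
      = ∑ i ∈ S, a * 2 := by
        rw [Finset.sum_const, nsmul_eq_mul]
        ring
    _ ≤ ∑ i ∈ S, Q ⊥ (flipAt i) * (1 - walsh S (flipAt i)) := by
        refine Finset.sum_le_sum fun i hi => ?_
        rw [walsh_flipAt hi]
        linarith [ha i]
    _ = ∑ z ∈ S.map ⟨flipAt, flipAt_injective⟩, Q ⊥ z * (1 - walsh S z) := by
        rw [Finset.sum_map, Function.Embedding.coeFn_mk]
    _ ≤ decayRate Q S :=
        Finset.sum_le_sum_of_subset_of_nonneg (Finset.subset_univ _) fun z _ _ =>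
          hQ.mul_one_sub_walsh_nonneg S z

lemma mexp_dotProduct_walsh (hQ : IsWalkGenerator Q) (t : ℝ) (u : ι → Bool) (S : Finset ι) :
    mexp (t • Q) u ⬝ᵥ walsh S = Real.exp (-(t * decayRate Q S)) * walsh S u := by
  have h : (t • Q) *ᵥ walsh S = -(t * decayRate Q S) • walsh S := by
    rw [smul_mulVec, hQ.mulVec_walsh, smul_smul, mul_neg]
  exact congrFun (mexp_mulVec_of_mulVec_eq_smul h) u

lemma sum_mexp (hQ : IsWalkGenerator Q) (t : ℝ) (u : ι → Bool) : ∑ v, mexp (t • Q) u v = 1 := by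
  simpa [walsh_empty, dotProduct_one, decayRate_empty] using hQ.mexp_dotProduct_walsh t u ∅

lemma tv_mexp_le_sqrt_sum_exp (hQ : IsWalkGenerator Q) (t : ℝ) (u : ι → Bool) :
    tv (mexp (t • Q) u) (fun _ => 1 / 2 ^ Fintype.card ι) ≤
      √(∑ S ∈ Finset.univ.erase ∅, Real.exp (-(2 * t * decayRate Q S))) / 2 := by
  refine (tv_uniform_le_sqrt_sum_sq_dotProduct_walsh (hQ.sum_mexp t u)).trans_eq ?_
  congr! 3 with S
  rw [hQ.mexp_dotProduct_walsh, mul_pow, sq (walsh S u), walsh_mul_self, mul_one,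
    ← Real.exp_nat_mul]
  congr 1
  push_cast
  ring

lemma sum_exp_decayRate_le (hQ : IsWalkGenerator Q) (ha : ∀ i, a ≤ Q ⊥ (flipAt i)) (ht : 0 ≤ t) :
    ∑ S ∈ Finset.univ.erase ∅, Real.exp (-(2 * t * decayRate Q S)) ≤
      Real.exp (Fintype.card ι * Real.exp (-(4 * a * t))) - 1 := by
  set x := Real.exp (-(4 * a * t)) with hx
  have hterm (S : Finset ι) : Real.exp (-(2 * t * decayRate Q S)) ≤ x ^ S.card := by
    rw [hx, ← Real.exp_nat_mul, Real.exp_le_exp]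
    linarith [mul_le_mul_of_nonneg_left (hQ.le_decayRate ha S) ht]
  have hbinom : ∑ S : Finset ι, x ^ S.card = (x + 1) ^ Fintype.card ι := by
    simpa using Fintype.sum_pow_mul_eq_add_pow ι x 1
  calc ∑ S ∈ Finset.univ.erase ∅, Real.exp (-(2 * t * decayRate Q S))
      ≤ ∑ S ∈ Finset.univ.erase (∅ : Finset ι), x ^ S.card :=
        Finset.sum_le_sum fun S _ => hterm S
    _ = (x + 1) ^ Fintype.card ι - 1 := by
        rw [Finset.sum_erase_eq_sub (Finset.mem_univ _), hbinom, Finset.card_empty, pow_zero]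
    _ ≤ Real.exp (Fintype.card ι * x) - 1 := by
        rw [Real.exp_nat_mul]
        gcongr
        exact Real.add_one_le_exp x

lemma tv_mexp_le_sqrt_exp (hQ : IsWalkGenerator Q) (ha : ∀ i, a ≤ Q ⊥ (flipAt i)) (ht : 0 ≤ t)
    (u : ι → Bool) :
    tv (mexp (t • Q) u) (fun _ => 1 / 2 ^ Fintype.card ι) ≤
      √(Real.exp (Fintype.card ι * Real.exp (-(4 * a * t))) - 1) / 2 := by
  refine (hQ.tv_mexp_le_sqrt_sum_exp t u).trans ?_
  gcongr
  exact hQ.sum_exp_decayRate_le ha ht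

end IsWalkGenerator

theorem tendsto_iSup_tv_mexp_zero {α : Type*} {l : Filter α} {ι : α → Type*} [∀ j, Fintype (ι j)]
    [∀ j, DecidableEq (ι j)] {Q : ∀ j, Matrix (ι j → Bool) (ι j → Bool) ℝ} {a t : α → ℝ}
    (hQ : ∀ᶠ j in l, IsWalkGenerator (Q j)) (ha : ∀ᶠ j in l, ∀ i, a j ≤ Q j ⊥ (flipAt i))
    (ht : ∀ᶠ j in l, 0 ≤ t j)
    (hlim : Tendsto (fun j => Fintype.card (ι j) * Real.exp (-(4 * a j * t j))) l (𝓝 0)) :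
    Tendsto (fun j => ⨆ u, tv (mexp (t j • Q j) u) (fun _ => 1 / 2 ^ Fintype.card (ι j)))
      l (𝓝 0) := by
  have hbound : Tendsto
      (fun j => √(Real.exp (Fintype.card (ι j) * Real.exp (-(4 * a j * t j))) - 1) / 2)
      l (𝓝 0) := by
    have hcont : Continuous fun y : ℝ => √(Real.exp y - 1) / 2 := by fun_prop
    simpa [Function.comp_def] using (hcont.tendsto 0).comp hlim
  refine squeeze_zero' (.of_forall fun j => Real.iSup_nonneg fun u => tv_nonneg _ _) ?_ hbound
  filter_upwards [hQ, ha, ht] with j hQj haj htj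
  exact ciSup_le fun u => hQj.tv_mexp_le_sqrt_exp haj htj u

end Walk

section PerturbedWalk

variable {N L : ℕ} {a a' : ℝ}

lemma hamDist_bot_symmDiff (u v : Fin N → Bool) : hamDist ⊥ (u ∆ v) = hamDist u v := by
  unfold hamDist
  congr 1
  ext i
  rw [Finset.mem_filter, Finset.mem_filter]
  cases hu : u i <;> cases hv : v i <;> simp [hu, hv]

lemma hamDist_bot_flipAt (i : Fin N) : hamDist ⊥ (flipAt i) = 1 := by
  refine Finset.card_eq_one.mpr ⟨i, Finset.ext fun j => ?_⟩
  rw [Finset.mem_filter]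
  by_cases hj : j = i <;> simp [flipAt, hj]

lemma symmDiff_eq_negv_bot_iff {u v : Fin N → Bool} : u ∆ v = negv ⊥ ↔ v = negv u := by
  simp only [funext_iff]
  refine forall_congr' fun i => ?_
  cases hu : u i <;> cases hv : v i <;> simp [negv, hu, hv]

lemma Qhyp_apply_of_ne {u v : Fin (2 * L - 1) → Bool} (huv : u ≠ v) :
    Qhyp L a a' u v = if hamDist u v = 1 ∨ v = negv u then a
      else if hamDist u v = 2 ∨ hamDist u v = 2 * L - 2 then a' else 0 :=
  if_neg huv

lemma Qhyp_sum_row (u : Fin (2 * L - 1) → Bool) : ∑ v, Qhyp L a a' u v = 0 := by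
  rw [← Finset.add_sum_erase _ _ (Finset.mem_univ u), ← Finset.filter_ne']
  have hoff := Finset.sum_congr rfl fun v (hv : v ∈ Finset.univ.filter (· ≠ u)) =>
    Qhyp_apply_of_ne (a := a) (a' := a') (Finset.mem_filter.mp hv).2.symm
  rw [hoff]
  simp [Qhyp]

lemma isWalkGenerator_Qhyp (ha : 0 ≤ a) (ha' : 0 ≤ a') : IsWalkGenerator (Qhyp L a a') where
  apply_of_ne {u v} huv := by
    have hne : ⊥ ≠ u ∆ v := fun h => huv (symmDiff_eq_bot.mp h.symm)
    simp only [Qhyp_apply_of_ne huv, Qhyp_apply_of_ne hne, hamDist_bot_symmDiff,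
      symmDiff_eq_negv_bot_iff]
  rate_nonneg hz := by
    rw [Qhyp_apply_of_ne hz.symm]
    split_ifs
    exacts [ha, ha', le_rfl]
  sum_row := Qhyp_sum_row

lemma Qhyp_bot_flipAt (i : Fin (2 * L - 1)) : Qhyp L a a' ⊥ (flipAt i) = a := by
  rw [Qhyp_apply_of_ne (flipAt_ne_bot i).symm, if_pos (.inl (hamDist_bot_flipAt i))]

lemma tendsto_dimension_mul_exp_neg_log {δ : ℝ} (hδ : 0 < δ) :
    Tendsto (fun L : ℕ => ((2 * L - 1 : ℕ) : ℝ) * Real.exp (-((1 + δ) * Real.log L)))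
      atTop (𝓝 0) := by
  have hlim : Tendsto (fun L : ℕ => 2 * (L : ℝ) ^ (-δ)) atTop (𝓝 0) := by
    simpa using ((tendsto_rpow_neg_atTop hδ).comp tendsto_natCast_atTop_atTop).const_mul 2
  refine squeeze_zero' (.of_forall fun L => by positivity) ?_ hlim
  filter_upwards [eventually_gt_atTop 0] with L hL
  have hL' : (0 : ℝ) < L := Nat.cast_pos.mpr hL
  calc ((2 * L - 1 : ℕ) : ℝ) * Real.exp (-((1 + δ) * Real.log L))
      ≤ (2 * L : ℕ) * Real.exp (-((1 + δ) * Real.log L)) := by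
        gcongr
        exact Nat.sub_le _ _
    _ = 2 * (L : ℝ) ^ (-δ) := by
        have hsplit : Real.log L * -δ = Real.log L + -((1 + δ) * Real.log L) := by ring
        rw [Real.rpow_def_of_pos hL', hsplit, Real.exp_add, Real.exp_log hL']
        push_cast
        ring

end PerturbedWalk

end Hyp

theorem hypercube_cutoff_upper_general {a a' : ℕ → ℝ} (ha : ∀ᶠ L in Filter.atTop, 0 < a L)
    (ha' : ∀ᶠ L in Filter.atTop, 0 ≤ a' L) {δ : ℝ} (hδ : 0 < δ) :
    Filter.Tendsto
      (fun L : ℕ =>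
        ⨆ u : Fin (2 * L - 1) → Bool,
          tv (mexp (((1 + δ) / 4 * (a L)⁻¹ * Real.log (L : ℝ)) • Qhyp L (a L) (a' L)) u)
            (fun _ => (1 : ℝ) / 2 ^ (2 * L - 1)))
      Filter.atTop (nhds 0) := by
  have hQ : ∀ᶠ L in Filter.atTop, IsWalkGenerator (Qhyp L (a L) (a' L)) := by
    filter_upwards [ha, ha'] with L haL ha'L using isWalkGenerator_Qhyp haL.le ha'L
  have ht : ∀ᶠ L : ℕ in Filter.atTop, 0 ≤ (1 + δ) / 4 * (a L)⁻¹ * Real.log (L : ℝ) := by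
    filter_upwards [ha] with L haL
    have := Real.log_natCast_nonneg L
    positivity
  have hlim : Filter.Tendsto (fun L : ℕ => (Fintype.card (Fin (2 * L - 1)) : ℝ) *
      Real.exp (-(4 * a L * ((1 + δ) / 4 * (a L)⁻¹ * Real.log (L : ℝ)))))
      Filter.atTop (nhds 0) := by
    refine (tendsto_dimension_mul_exp_neg_log hδ).congr' ?_
    filter_upwards [ha] with L haL
    rw [Fintype.card_fin]
    congr 3
    field_simp
  simpa only [Fintype.card_fin] using
    tendsto_iSup_tv_mexp_zero hQ (.of_forall fun L i => (Qhyp_bot_flipAt i).ge) ht hlim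

/-- Lemma `LemmaCutoffSRWWithJump`, upper bound: for the perturbed
hypercube walk `Q_hyp` with rates `a_L ≍ L⁻⁸` and `0 ≤ a_L' ≲ L⁻⁹`, at time
`T_{δ,+} = ((1+δ)/4) a_L⁻¹ log L` the worst-case total-variation distance to the uniform
measure tends to `0`. -/
theorem hypercube_cutoff_upper (c₁ c₂ C : ℝ) (hc₁ : 0 < c₁) (hc₂ : 0 < c₂) (hC : 0 < C)
    (a a' : ℕ → ℝ)
    (ha : ∀ L : ℕ, c₁ / (L : ℝ) ^ 8 ≤ a L ∧ a L ≤ c₂ / (L : ℝ) ^ 8)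
    (ha' : ∀ L : ℕ, 0 ≤ a' L ∧ a' L ≤ C / (L : ℝ) ^ 9)
    (δ : ℝ) (hδ : 0 < δ) :
    Filter.Tendsto
      (fun L : ℕ =>
        ⨆ u : Fin (2 * L - 1) → Bool,
          tv (mexp (((1 + δ) / 4 * (a L)⁻¹ * Real.log (L : ℝ)) • Qhyp L (a L) (a' L)) u)
            (fun _ => (1 : ℝ) / 2 ^ (2 * L - 1)))
      Filter.atTop (nhds 0) := by
  have hpos : ∀ᶠ L in Filter.atTop, 0 < a L := by
    filter_upwards [Filter.eventually_gt_atTop 0] with L hL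
    exact (ha L).1.trans_lt' (by positivity)
  exact hypercube_cutoff_upper_general hpos (.of_forall fun L => (ha' L).1) hδ

end
end
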